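/- arXiv:2505.10501 — 8 statements merged into one kernel-verified Lean document; each statement's English description precedes it below -/
import Mathlib

section
/- Let T be a tree on vertex set {1,...,n} with n ≥ 2, let k ≥ 1 be an integer, and let c ∈ ℝ^n. Then M(c,...,c) = Σ_{e ∈ E(T)} ( C^k − α_e^k − (C − α_e)^k ), where C = Σ_{i=1}^n c_i and α_e = Σ_{i ∈ A(e)} c_i. -/
/-!
The Steiner distance of a nonempty vertex set `U` of a tree equals the number of edges `e` such
that `U` meets both components of `T - e` (`steinerDist_eq_card`). Every connected subgraph
containing `U` must use such an edge, and conversely the union of the paths from a fixed `x₀ ∈ U`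
to the other vertices of `U` uses only such edges, since an edge of the path from `x₀` to `y`
separates `x₀` from `y`.

Substituting this into the form and exchanging the two sums, an edge `e` contributes
`∑ ∏ c (i j)` over the tuples `i` that meet both sides of `e`. As `k ≥ 1`, a tuple lying in `A(e)`
does not lie in its complement, so this is the sum over all tuples minus the sums over the tuples
inside `A(e)` and inside its complement; each of the three is a `k`-th power.
-/

open scoped Classical

/-- The Steiner distance of a set `U` of vertices of a graph `G`: the minimum number of
edges of a connected subgraph of `G` whose vertex set contains `U`. -/
noncomputable def steinerDist {n : ℕ} (G : SimpleGraph (Fin n)) (U : Set (Fin n)) : ℕ :=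
  sInf {m | ∃ H : G.Subgraph, H.Connected ∧ U ⊆ H.verts ∧ H.edgeSet.ncard = m}

/-- The order-`k` Steiner distance multilinear form of a graph `G`. -/
noncomputable def steinerForm {n : ℕ} (G : SimpleGraph (Fin n)) (k : ℕ)
    (c : Fin k → Fin n → ℝ) : ℝ :=
  ∑ i : Fin k → Fin n, (steinerDist G (Set.range i) : ℝ) * ∏ j, c j (i j)

/-- `A` is a choice, for each edge `e` of `G`, of the vertex set of one of the two
components of `G - e`. -/
def IsEdgeSideChoice {n : ℕ} (G : SimpleGraph (Fin n)) (A : Sym2 (Fin n) → Set (Fin n)) :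
    Prop :=
  ∀ e ∈ G.edgeSet, ∃ u v : Fin n, e = s(u, v) ∧
    A e = {w | (G.deleteEdges {e}).Reachable v w}

open SimpleGraph

/-- The edge `e` separates `U` when `U` meets both the chosen side `A e` and its complement. -/
def Separates {n : ℕ} (A : Sym2 (Fin n) → Set (Fin n)) (U : Set (Fin n)) (e : Sym2 (Fin n)) :
    Prop :=
  (∃ x ∈ U, x ∈ A e) ∧ ∃ y ∈ U, y ∉ A e

/-- In a connected graph, deleting an edge `s(u, v)` leaves every vertex reachable from `u` or
from `v`. -/
lemma reachable_endpoint {V : Type*} {G : SimpleGraph V} (hG : G.Connected) (u v w : V) :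
    (G.deleteEdges {s(u, v)}).Reachable u w ∨ (G.deleteEdges {s(u, v)}).Reachable v w := by
  obtain ⟨p⟩ := hG.preconnected w u
  induction p with
  | nil => exact Or.inl (Reachable.refl _)
  | @cons a b d hadj p ih =>
    by_cases he : s(a, b) = s(d, v)
    · rcases Sym2.eq_iff.1 he with ⟨rfl, -⟩ | ⟨rfl, -⟩
      · exact Or.inl (Reachable.refl _)
      · exact Or.inr (Reachable.refl _)
    · have hab : (G.deleteEdges {s(d, v)}).Adj b a := by
        rw [deleteEdges_adj]
        exact ⟨hadj.symm, by rwa [Set.mem_singleton_iff, Sym2.eq_swap]⟩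
      exact ih.imp (fun h => h.trans hab.reachable) (fun h => h.trans hab.reachable)

/-- `T - e` has at most two components, so two vertices outside `A e` lie in a common one, as do
two vertices of `A e`. -/
lemma reachable_of_same_side {n : ℕ} {G : SimpleGraph (Fin n)} (hT : G.IsTree)
    {A : Sym2 (Fin n) → Set (Fin n)} (hA : IsEdgeSideChoice G A) {e : Sym2 (Fin n)}
    (he : e ∈ G.edgeSet) {x y : Fin n} (hxy : x ∈ A e ↔ y ∈ A e) :
    (G.deleteEdges {e}).Reachable x y := by
  obtain ⟨u, v, rfl, hAe⟩ := hA e he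
  rw [hAe, Set.mem_ofPred_eq, Set.mem_ofPred_eq] at hxy
  have hx := reachable_endpoint hT.connected u v x
  have hy := reachable_endpoint hT.connected u v y
  by_cases h : (G.deleteEdges {s(u, v)}).Reachable v x
  · exact h.symm.trans (hxy.1 h)
  · exact (hx.resolve_right h).symm.trans (hy.resolve_right (fun h' => h (hxy.2 h')))

lemma not_reachable_of_mem_path {n : ℕ} {G : SimpleGraph (Fin n)} (hT : G.IsTree)
    {e : Sym2 (Fin n)} {x y : Fin n} (p : G.Path x y) (hp : e ∈ (p : G.Walk x y).edges) :
    ¬ (G.deleteEdges {e}).Reachable x y := by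
  rintro ⟨q⟩
  -- A walk avoiding `e` shortens to a path of the tree avoiding `e`, which has to be `p`.
  let q' : G.Walk x y := q.mapLe (G.deleteEdges_le {e})
  have hpq : p = q'.toPath := (hT.isAcyclic.subsingleton_path x y).elim _ _
  rw [hpq] at hp
  have h1 : e ∈ q'.edges := Walk.edges_toPath_subset_edges _ hp
  have h2 : e ∈ q.edges := by simpa [q'] using h1
  have h3 := q.edges_subset_edgeSet h2
  simp [edgeSet_deleteEdges] at h3

/-- A connected subgraph containing `U` uses every edge that separates `U`. -/
lemma mem_edgeSet_of_separates {n : ℕ} {G : SimpleGraph (Fin n)}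
    {A : Sym2 (Fin n) → Set (Fin n)} (hA : IsEdgeSideChoice G A) {U : Set (Fin n)}
    {H : G.Subgraph} (hH : H.Connected) (hU : U ⊆ H.verts) {e : Sym2 (Fin n)}
    (he : e ∈ G.edgeSet) (hs : Separates A U e) : e ∈ H.edgeSet := by
  by_contra hne
  obtain ⟨⟨x, hxU, hx⟩, y, hyU, hy⟩ := hs
  obtain ⟨u, v, -, hAe⟩ := hA e he
  let f : H.coe →g G.deleteEdges {e} :=
    { toFun := Subtype.val
      map_rel' := by
        intro a b hab
        rw [deleteEdges_adj]
        refine ⟨H.adj_sub hab, ?_⟩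
        rintro rfl
        exact hne hab }
  have hr : (G.deleteEdges {e}).Reachable x y :=
    (hH.coe.preconnected ⟨x, hU hxU⟩ ⟨y, hU hyU⟩).map f
  rw [hAe] at hx hy
  exact hy (Reachable.trans hx hr)

/-- The union of the tree paths from `x₀` to the vertices of `S`. -/
lemma exists_path_union {n : ℕ} {G : SimpleGraph (Fin n)} (hT : G.IsTree) (x₀ : Fin n)
    (S : Finset (Fin n)) :
    ∃ H : G.Subgraph, H.Connected ∧ x₀ ∈ H.verts ∧ (S : Set (Fin n)) ⊆ H.verts ∧
      ∀ e ∈ H.edgeSet, ∃ y ∈ S, ∃ p : G.Path x₀ y, e ∈ (p : G.Walk x₀ y).edges := by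
  induction S using Finset.induction_on with
  | empty =>
    exact ⟨G.singletonSubgraph x₀, Subgraph.singletonSubgraph_connected, by simp, by simp,
      by simp⟩
  | insert a S _ ih =>
    obtain ⟨H, hH, hx, hS, hE⟩ := ih
    obtain ⟨w⟩ := hT.connected.preconnected x₀ a
    let p : G.Path x₀ a := w.toPath
    refine ⟨H ⊔ (p : G.Walk x₀ a).toSubgraph, ?_, Or.inl hx, ?_, ?_⟩
    · exact Subgraph.connected_sup hH.preconnected (Walk.toSubgraph_connected _).preconnected
        ⟨x₀, hx, Walk.start_mem_verts_toSubgraph _⟩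
    · intro y hy
      rcases Finset.mem_insert.1 (Finset.mem_coe.1 hy) with rfl | hy
      · exact Or.inr (Walk.end_mem_verts_toSubgraph _)
      · exact Or.inl (hS hy)
    · intro e he
      rw [Subgraph.edgeSet_sup] at he
      rcases he with he | he
      · obtain ⟨y, hy, q, hq⟩ := hE e he
        exact ⟨y, Finset.mem_insert_of_mem hy, q, hq⟩
      · exact ⟨a, Finset.mem_insert_self _ _, p, (Walk.mem_edges_toSubgraph _).1 he⟩

/-- The Steiner distance of a nonempty set in a tree is the number of edges separating it. -/
lemma steinerDist_eq_card {n : ℕ} {G : SimpleGraph (Fin n)} (hT : G.IsTree)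
    {A : Sym2 (Fin n) → Set (Fin n)} (hA : IsEdgeSideChoice G A) {U : Set (Fin n)}
    (hU : U.Nonempty) :
    steinerDist G U = (G.edgeFinset.filter (Separates A U)).card := by
  have lower : ∀ H : G.Subgraph, H.Connected → U ⊆ H.verts →
      (G.edgeFinset.filter (Separates A U)).card ≤ H.edgeSet.ncard := by
    intro H hH hUH
    rw [← Set.ncard_coe_finset]
    refine Set.ncard_le_ncard ?_ (Set.toFinite _)
    intro e he
    obtain ⟨he, hs⟩ := Finset.mem_filter.1 (Finset.mem_coe.1 he)
    exact mem_edgeSet_of_separates hA hH hUH (mem_edgeFinset.1 he) hs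
  obtain ⟨x₀, hx₀⟩ := hU
  obtain ⟨H, hH, -, hS, hE⟩ := exists_path_union hT x₀ U.toFinset
  rw [Set.coe_toFinset] at hS
  have upper : H.edgeSet.ncard ≤ (G.edgeFinset.filter (Separates A U)).card := by
    rw [← Set.ncard_coe_finset]
    refine Set.ncard_le_ncard ?_ (Set.toFinite _)
    intro e he
    have heG : e ∈ G.edgeSet := H.edgeSet_subset he
    obtain ⟨y, hy, p, hp⟩ := hE e he
    have hy : y ∈ U := by simpa using hy
    have hside : ¬ (x₀ ∈ A e ↔ y ∈ A e) := fun h =>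
      not_reachable_of_mem_path hT p hp (reachable_of_same_side hT hA heG h)
    refine Finset.mem_coe.2 (Finset.mem_filter.2 ⟨mem_edgeFinset.2 heG, ?_⟩)
    by_cases hx : x₀ ∈ A e
    · exact ⟨⟨x₀, hx₀, hx⟩, y, hy, by tauto⟩
    · exact ⟨⟨y, hy, by tauto⟩, x₀, hx₀, hx⟩
  apply le_antisymm
  · refine le_trans (Nat.sInf_le ?_) upper
    exact ⟨H, hH, hS, rfl⟩
  · refine le_csInf ⟨_, H, hH, hS, rfl⟩ ?_
    rintro m ⟨K, hK, hUK, rfl⟩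
    exact lower K hK hUK

lemma prod_indicator_eq_ite {n k : ℕ} (B : Set (Fin n)) (c : Fin n → ℝ) (i : Fin k → Fin n) :
    ∏ j, B.indicator c (i j) = if ∀ j, i j ∈ B then ∏ j, c (i j) else 0 := by
  split_ifs with h
  · exact Finset.prod_congr rfl fun j _ => Set.indicator_of_mem (h j) c
  · push Not at h
    obtain ⟨j, hj⟩ := h
    exact Finset.prod_eq_zero (Finset.mem_univ j) (Set.indicator_of_notMem hj c)

/-- The contribution of one edge: the sum over the tuples that meet both sides. -/
lemma sum_separates {n k : ℕ} (hk : 1 ≤ k) (A : Sym2 (Fin n) → Set (Fin n)) (e : Sym2 (Fin n))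
    (c : Fin n → ℝ) :
    ∑ i : Fin k → Fin n, (if Separates A (Set.range i) e then ∏ j, c (i j) else 0) =
      (∑ i, c i) ^ k - (∑ i, (A e).indicator c i) ^ k
          - ((∑ i, c i) - ∑ i, (A e).indicator c i) ^ k := by
  have hcompl : (∑ i, c i) - ∑ i, (A e).indicator c i = ∑ i, ((A e)ᶜ).indicator c i := by
    rw [← Finset.sum_sub_distrib, Set.indicator_compl]
    rfl
  rw [hcompl, Fintype.sum_pow, Fintype.sum_pow, Fintype.sum_pow, ← Finset.sum_sub_distrib,
    ← Finset.sum_sub_distrib]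
  refine Finset.sum_congr rfl fun i _ => ?_
  rw [prod_indicator_eq_ite, prod_indicator_eq_ite]
  by_cases h1 : ∀ j, i j ∈ A e
  · -- Here `k ≥ 1` is needed: the empty tuple would lie on both sides.
    have h2 : ¬ ∀ j, i j ∈ (A e)ᶜ := fun h => h ⟨0, hk⟩ (h1 _)
    have h3 : ¬ Separates A (Set.range i) e := by
      rintro ⟨-, _, ⟨j, rfl⟩, hj⟩
      exact hj (h1 j)
    simp only [if_pos h1, if_neg h2, if_neg h3]
    ring
  · by_cases h2 : ∀ j, i j ∈ (A e)ᶜ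
    · have h3 : ¬ Separates A (Set.range i) e := by
        rintro ⟨⟨_, ⟨j, rfl⟩, hj⟩, -⟩
        exact h2 j hj
      simp only [if_neg h1, if_pos h2, if_neg h3]
      ring
    · have h3 : Separates A (Set.range i) e := by
        push Not at h1 h2
        obtain ⟨a, ha⟩ := h1
        obtain ⟨b, hb⟩ := h2
        exact ⟨⟨_, ⟨b, rfl⟩, by simpa using hb⟩, _, ⟨a, rfl⟩, ha⟩
      simp only [if_neg h1, if_neg h2, if_pos h3]
      ring

theorem stmt0 (n k : ℕ) (hn : 2 ≤ n) (hk : 1 ≤ k)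
    (G : SimpleGraph (Fin n)) (hT : G.IsTree)
    (A : Sym2 (Fin n) → Set (Fin n)) (hA : IsEdgeSideChoice G A)
    (c : Fin n → ℝ) :
    steinerForm G k (fun _ => c) =
      ∑ e ∈ G.edgeFinset,
        ((∑ i, c i) ^ k - (∑ i, (A e).indicator c i) ^ k
          - ((∑ i, c i) - ∑ i, (A e).indicator c i) ^ k) := by
  have : Nonempty (Fin k) := ⟨⟨0, hk⟩⟩
  rw [← Finset.sum_congr rfl fun e _ => sum_separates hk A e c, Finset.sum_comm]
  unfold steinerForm
  refine Finset.sum_congr rfl fun i _ => ?_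
  rw [steinerDist_eq_card hT hA (Set.range_nonempty i), ← Finset.sum_filter,
    Finset.sum_const, nsmul_eq_mul]
end

section
/- Let T be a tree on vertex set {1,...,n} with n ≥ 2. Then the n−1 vectors a'_e = a_e − (|A(e)|/n)𝕁, for e ∈ E(T), form a basis of the hyperplane H_n = {x ∈ ℝ^n : Σ_{i=1}^n x_i = 0}. -/
/-!
For an edge `e = uv` of the tree, consider the functional `x ↦ x v - x u`. It annihilates
the constant vectors, and it annihilates the indicator of `A f` for every edge `f ≠ e`, because `u`
and `v` remain adjacent in `G - f` and so lie on the same side of `f`. On the indicator of `A e`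
it is `1` (for the orientation with `v ∈ A e`), since every edge of a tree is a bridge. Hence these
functionals are dual to the vectors `a'_e`, which are therefore linearly independent. They lie in
the hyperplane `H_n`, and there are `n - 1` of them while `dim H_n ≤ n - 1`, so they span it.
-/

open scoped Classical

/-- The vector `a'_e = a_e - (|A(e)|/n) 𝕁`, where `a_e` is the indicator vector of the
side `A e` of the edge `e`. -/
noncomputable def aVec' {n : ℕ} (A : Sym2 (Fin n) → Set (Fin n)) (e : Sym2 (Fin n)) :
    Fin n → ℝ :=
  fun i => (A e).indicator 1 i - (A e).ncard / n

/-- The hyperplane `H_n = {x ∈ ℝ^n : Σ_i x_i = 0}`. -/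
noncomputable def sumZeroHyperplane (n : ℕ) : Submodule ℝ (Fin n → ℝ) :=
  LinearMap.ker (∑ i : Fin n, LinearMap.proj i : (Fin n → ℝ) →ₗ[ℝ] ℝ)

/-- The functional `x ↦ x v - x u` of an edge `uv ≠ f` vanishes on `a'_f`. -/
lemma aVec'_eq_of_adj {n : ℕ} {G : SimpleGraph (Fin n)} {A : Sym2 (Fin n) → Set (Fin n)}
    (hA : IsEdgeSideChoice G A) {f : Sym2 (Fin n)} (hf : f ∈ G.edgeSet) {u v : Fin n}
    (huv : G.Adj u v) (hne : s(u, v) ≠ f) : aVec' A f u = aVec' A f v := by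
  obtain ⟨p, q, -, hAf⟩ := hA f hf
  have hadj : (G.deleteEdges {f}).Adj u v := by
    simpa [SimpleGraph.deleteEdges_adj] using And.intro huv hne
  have hiff : u ∈ A f ↔ v ∈ A f := by
    rw [hAf]
    exact ⟨fun h => h.trans hadj.reachable, fun h => h.trans hadj.symm.reachable⟩
  simp only [aVec', Set.indicator_apply, hiff, Pi.one_apply]

/-- With the orientation given by the choice of side, the functional of `e` is `1` on `a'_e`. -/
lemma exists_aVec'_sub_eq_one {n : ℕ} {G : SimpleGraph (Fin n)} (hT : G.IsTree)
    {A : Sym2 (Fin n) → Set (Fin n)} (hA : IsEdgeSideChoice G A) {e : Sym2 (Fin n)}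
    (he : e ∈ G.edgeSet) :
    ∃ u v : Fin n, e = s(u, v) ∧ aVec' A e v - aVec' A e u = 1 := by
  obtain ⟨u, v, rfl, hAe⟩ := hA e he
  refine ⟨u, v, rfl, ?_⟩
  have hbridge := SimpleGraph.isAcyclic_iff_forall_isBridge.mp hT.isAcyclic he
  rw [SimpleGraph.isBridge_iff] at hbridge
  have hv : v ∈ A s(u, v) := by
    rw [hAe]
    exact SimpleGraph.Reachable.refl v
  have hu : u ∉ A s(u, v) := by
    rw [hAe]
    exact fun h => hbridge h.symm
  simp [aVec', hu, hv]

lemma linearIndependent_aVec' {n : ℕ} {G : SimpleGraph (Fin n)} (hT : G.IsTree)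
    {A : Sym2 (Fin n) → Set (Fin n)} (hA : IsEdgeSideChoice G A) :
    LinearIndependent ℝ (fun e : G.edgeFinset => aVec' A e.1) := by
  rw [Fintype.linearIndependent_iff]
  intro c hc e
  have he : e.1 ∈ G.edgeSet := SimpleGraph.mem_edgeFinset.mp e.2
  obtain ⟨u, v, huv, hone⟩ := exists_aVec'_sub_eq_one hT hA he
  have hu := congrFun hc u
  have hv := congrFun hc v
  simp only [Finset.sum_apply, Pi.smul_apply, smul_eq_mul, Pi.zero_apply] at hu hv
  have hsum : ∑ f : G.edgeFinset, c f * (aVec' A f.1 v - aVec' A f.1 u) = 0 := by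
    simp only [mul_sub, Finset.sum_sub_distrib, hu, hv, sub_self]
  rw [Finset.sum_eq_single e, hone, mul_one] at hsum
  · exact hsum
  · intro f _ hfe
    have hadj : G.Adj u v := by rwa [huv, SimpleGraph.mem_edgeSet] at he
    rw [aVec'_eq_of_adj hA (SimpleGraph.mem_edgeFinset.mp f.2) hadj
      (fun h => hfe (Subtype.ext (huv.trans h).symm)), sub_self, mul_zero]
  · simp

lemma aVec'_mem_sumZeroHyperplane {n : ℕ} (hn : 2 ≤ n) (A : Sym2 (Fin n) → Set (Fin n))
    (e : Sym2 (Fin n)) : aVec' A e ∈ sumZeroHyperplane n := by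
  have hn0 : (n : ℝ) ≠ 0 := by positivity
  have hind : ∑ i, (A e).indicator (1 : Fin n → ℝ) i = (A e).ncard := by
    simp [Set.indicator_apply, Set.ncard_eq_toFinset_card', Set.toFinset]
  simp only [sumZeroHyperplane, LinearMap.mem_ker, LinearMap.sum_apply, LinearMap.proj_apply,
    aVec', Finset.sum_sub_distrib, hind]
  simp [mul_div_cancel₀, hn0]

lemma finrank_sumZeroHyperplane_lt {n : ℕ} (hn : 2 ≤ n) :
    Module.finrank ℝ (sumZeroHyperplane n) < n := by
  have hne : sumZeroHyperplane n ≠ ⊤ := by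
    intro h
    have h1 : (1 : Fin n → ℝ) ∈ sumZeroHyperplane n := h ▸ Submodule.mem_top
    simp [sumZeroHyperplane] at h1
    omega
  simpa using Submodule.finrank_lt hne

theorem stmt5 (n : ℕ) (hn : 2 ≤ n)
    (G : SimpleGraph (Fin n)) (hT : G.IsTree)
    (A : Sym2 (Fin n) → Set (Fin n)) (hA : IsEdgeSideChoice G A) :
    G.edgeFinset.card = n - 1 ∧
    LinearIndependent ℝ (fun e : G.edgeFinset => aVec' A e.1) ∧
    Submodule.span ℝ (Set.range (fun e : G.edgeFinset => aVec' A e.1)) =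
      sumZeroHyperplane n := by
  have hcard : G.edgeFinset.card + 1 = n := by
    simpa using hT.card_edgeFinset
  have hli := linearIndependent_aVec' hT hA
  refine ⟨by omega, hli, Submodule.eq_of_le_of_finrank_le ?_ ?_⟩
  · rw [Submodule.span_le]
    rintro _ ⟨e, rfl⟩
    exact aVec'_mem_sumZeroHyperplane hn A e.1
  · rw [finrank_span_eq_card hli, Fintype.card_coe]
    have := finrank_sumZeroHyperplane_lt hn
    omega
end

section
/- Let T be a tree on vertex set {1,...,n} with n ≥ 2, and let P'_T be the n×n matrix whose first n−1 rows are the vectors (a'_e)^T for e ∈ E(T) (in a fixed ordering of E(T)) and whose last row is 𝕁^T. Let X be the n×n matrix whose column indexed by the edge e = {i,j} (with j ∈ A(e) and i ∈ B(e)) has entry −1 in row i, entry 1 in row j, and 0 in every other row, and whose last column is 𝕁/n. Then P'_T X = I_n; in particular P'_T is invertible with inverse X. -/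
open scoped Classical

/-!
Column `m` of `X` is the difference of the basis vectors at the ends of the edge `e_m`, so pairing
it with a row `f` gives `f (v m) - f (u m)`. Constant shifts cancel in this difference, hence only
the indicator of the component `A r` matters. For `r = m` the difference is `1`, since in a tree
every edge is a bridge and `u m ∉ A m` (`not_reachable_of_isTree`); for `r ≠ m` the edge `e_m`
survives in `G - e_r`, so its ends lie in the same component and the difference is `0`
(`reachable_deleteEdges_iff`). The last column averages a row: rows `a'_e` have mean zero and the
all-ones row has mean one. A one-sided inverse of a square matrix is two-sided.
-/

lemma not_reachable_of_isTree {V : Type*} {G : SimpleGraph V} (hT : G.IsTree) {a b : V}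
    (h : G.Adj a b) : ¬ (G.deleteEdges {s(a, b)}).Reachable b a := by
  have hb := SimpleGraph.isAcyclic_iff_forall_adj_isBridge.mp hT.isAcyclic h
  rw [SimpleGraph.isBridge_iff] at hb
  exact fun hr => hb hr.symm

lemma reachable_deleteEdges_iff {V : Type*} {G : SimpleGraph V} {a b : V} {e : Sym2 V}
    (h : G.Adj a b) (hne : s(a, b) ≠ e) (w : V) :
    (G.deleteEdges {e}).Reachable w b ↔ (G.deleteEdges {e}).Reachable w a := by
  have hab : (G.deleteEdges {e}).Adj a b := by
    rw [SimpleGraph.deleteEdges_adj]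
    exact ⟨h, by simpa using hne⟩
  exact ⟨fun hr => hr.trans hab.reachable.symm, fun hr => hr.trans hab.reachable⟩

lemma sum_mul_edge_column {ι : Type*} [Fintype ι] [DecidableEq ι] (f : ι → ℝ) {a b : ι} (hab : a ≠ b) :
    ∑ k, f k * (if k = b then 1 else if k = a then -1 else 0) = f b - f a := by
  have h : ∀ k, f k * (if k = b then (1 : ℝ) else if k = a then -1 else 0)
      = (if k = b then f k else 0) - (if k = a then f k else 0) := by
    intro k
    by_cases h1 : k = b
    · subst h1
      simp [hab.symm]
    · by_cases h2 : k = a <;> simp [h1, h2, hab]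
  simp [h, Finset.sum_sub_distrib]

lemma sum_centered_indicator {n : ℕ} (hn : n ≠ 0) (S : Set (Fin n)) :
    ∑ k, (S.indicator (1 : Fin n → ℝ) k - (S.ncard : ℝ) / n) = 0 := by
  have hn' : (n : ℝ) ≠ 0 := by exact_mod_cast hn
  have h : ∑ k, S.indicator (1 : Fin n → ℝ) k = S.ncard := by
    simp [Set.indicator_apply, Set.ncard_eq_toFinset_card']
  rw [Finset.sum_sub_distrib, h]
  simp
  field_simp
  simp

theorem stmt7 (n : ℕ) (hn : 2 ≤ n)
    (G : SimpleGraph (Fin n)) (hT : G.IsTree)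
    -- the edges of `G` in a fixed ordering: edge `m` is `s(u m, v m)`
    (u v : Fin (n - 1) → Fin n)
    (hadj : ∀ m, G.Adj (u m) (v m))
    (hinj : Function.Injective (fun m => s(u m, v m)))
    (hsurj : ∀ e ∈ G.edgeSet, ∃ m, e = s(u m, v m))
    -- `A m` is the vertex set of the component of `G - e_m` containing `v m`
    -- (so `u m` lies in the other component `B m`)
    (A : Fin (n - 1) → Set (Fin n))
    (hA : ∀ m, A m = {w | (G.deleteEdges {s(u m, v m)}).Reachable (v m) w}) :
    -- `P'`: first `n-1` rows are the vectors `a'_e`, last row is `𝕁ᵀ`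
    let P' : Matrix (Fin n) (Fin n) ℝ := Matrix.of fun r c =>
      if h : (r : ℕ) < n - 1 then
        (A ⟨r, h⟩).indicator 1 c - (A ⟨r, h⟩).ncard / n
      else 1
    -- `X`: column `m < n-1` has `1` in row `v m ∈ A m`, `-1` in row `u m ∈ B m`,
    -- `0` elsewhere; the last column is `𝕁/n`
    let X : Matrix (Fin n) (Fin n) ℝ := Matrix.of fun r c =>
      if h : (c : ℕ) < n - 1 then
        (if r = v ⟨c, h⟩ then 1 else if r = u ⟨c, h⟩ then -1 else 0)
      else 1 / n
    P' * X = 1 ∧ X * P' = 1 := by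
  intro P' X
  have hn' : (n : ℝ) ≠ 0 := by
    have : n ≠ 0 := by omega
    exact_mod_cast this
  have key : P' * X = 1 := by
    ext r c
    rw [Matrix.mul_apply, Matrix.one_apply]
    by_cases hc : (c : ℕ) < n - 1
    · simp only [X, Matrix.of_apply, dif_pos hc]
      rw [sum_mul_edge_column (fun k => P' r k) (hadj ⟨c, hc⟩).ne]
      by_cases hr : (r : ℕ) < n - 1
      · simp only [P', Matrix.of_apply, dif_pos hr, sub_sub_sub_cancel_right]
        simp only [hA, Set.indicator_apply, Set.mem_setOf_eq, Pi.one_apply]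
        by_cases hrc : r = c
        · subst hrc
          simp [not_reachable_of_isTree hT (hadj ⟨r, hr⟩)]
        · have hne : s(u ⟨c, hc⟩, v ⟨c, hc⟩) ≠ s(u ⟨r, hr⟩, v ⟨r, hr⟩) := by
            intro h
            have h' := congrArg Fin.val (hinj h)
            exact hrc (Fin.ext h'.symm)
          simp [hrc, reachable_deleteEdges_iff (hadj ⟨c, hc⟩) hne]
      · have hrc : r ≠ c := by
          rintro rfl
          exact hr hc
        simp [P', hr, hrc]
    · simp only [X, Matrix.of_apply, dif_neg hc]
      rw [← Finset.sum_mul]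
      by_cases hr : (r : ℕ) < n - 1
      · have hrc : r ≠ c := by
          rintro rfl
          exact hc hr
        simp only [P', Matrix.of_apply, dif_pos hr]
        rw [sum_centered_indicator (by omega), zero_mul, if_neg hrc]
      · have hrc : r = c := Fin.ext (by omega)
        simp [P', hrc, hc, hn']
  exact ⟨key, mul_eq_one_comm.mp key⟩
end

section
/- Let T be a tree on vertex set {1,...,n} with n ≥ 2, let k ≥ 2 be even, and let c_1,...,c_k ∈ ℝ^n. Setting d_j = Z c_j for each j, one has M(c_1,...,c_k) = Σ_{t=1}^{k−1} (−1)^{t−1} Σ_{S ⊆ {1,...,k}, |S| = t} Σ_{w=1}^{n−1} ∏_{j ∈ S} (d_j)_w · ∏_{j ∉ S} (d_j)_n − 2 Σ_{w=1}^{n−1} ∏_{j=1}^k (d_j)_w. (That is, M(c_1,...,c_k) = (U − 2(I_{n−1}^k ⊕ [0]))(Zc_1,...,Zc_k), generalizing Graham–Lovász's near-diagonalization to even k.) -/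
/-!
Root the tree at `vn`, and say that `w` is an ancestor of `y` when `w` lies on the path from `y`
to the root. Every edge joins a unique non-root vertex `w` to its parent, and it separates the
descendants of `w` from all other vertices. Hence the Steiner distance of a nonempty set `U` is
the number of non-root `w` that are ancestors of some but not all elements of `U`
(`steinerDist_eq`): a connected subgraph containing `U` must use the parent edge of each such `w`
(`card_le_edges`), and the subgraph induced on the vertices lying between the deepest common
ancestor of `U` and elements of `U` uses no other edges (`exists_subgraph`).

With `d j w = ∑ c j y` over the descendants `y` of `w`, each `w` therefore contributes
`∏ d j vn - ∏ d j w - ∏ (d j vn - d j w)` to the Steiner form: all tuples, minus those entirely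
below `w`, minus those entirely outside. Expanding the last product over subsets `S` (`expand`),
the term `S = ∅` cancels `∏ d j vn`, and for even `k` the term `S = univ` doubles `∏ d j w`.
-/

open scoped Classical

/-- The zeta matrix of a graph `G` rooted at `r`: entry `(x, y)` is `1` if `x` lies on
the (unique, when `G` is a tree) shortest path from `y` to `r`, and `0` otherwise. -/
noncomputable def zetaMatrix {n : ℕ} (G : SimpleGraph (Fin n)) (r : Fin n) :
    Matrix (Fin n) (Fin n) ℝ :=
  Matrix.of fun x y => if G.dist y x + G.dist x r = G.dist y r then 1 else 0

/-! ### Ancestors in a rooted tree -/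

/-- `w` is an ancestor of `y` (possibly `y` itself) in the tree rooted at `r`: it lies on a
geodesic from `y` to `r`. -/
def Anc {n : ℕ} (G : SimpleGraph (Fin n)) (r w y : Fin n) : Prop :=
  G.dist y w + G.dist w r = G.dist y r

lemma exists_closer {n : ℕ} {G : SimpleGraph (Fin n)} (hT : G.IsTree) {x y : Fin n}
    (h : x ≠ y) : ∃ z, G.Adj x z ∧ G.dist z y + 1 = G.dist x y := by
  obtain ⟨p, hp⟩ := hT.connected.exists_walk_length_eq_dist x y
  cases p with
  | nil => exact absurd rfl h
  | @cons _ z _ hxz q =>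
    refine ⟨z, hxz, ?_⟩
    have h1 := SimpleGraph.dist_le q
    have h2 := hT.connected.dist_triangle (u := x) (v := z) (w := y)
    have h3 := SimpleGraph.dist_eq_one_iff_adj.2 hxz
    simp only [SimpleGraph.Walk.length_cons] at hp
    omega

/-- The step towards `y` is unique, because both candidates start a path from `x` to `y`. -/
lemma closer_unique {n : ℕ} {G : SimpleGraph (Fin n)} (hT : G.IsTree) {x y a b : Fin n}
    (ha : G.Adj x a) (hb : G.Adj x b) (hda : G.dist a y + 1 = G.dist x y)
    (hdb : G.dist b y + 1 = G.dist x y) : a = b := by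
  obtain ⟨p, hp⟩ := hT.connected.exists_walk_length_eq_dist a y
  obtain ⟨q, hq⟩ := hT.connected.exists_walk_length_eq_dist b y
  have hp' : (SimpleGraph.Walk.cons ha p).IsPath :=
    SimpleGraph.Walk.isPath_of_length_eq_dist _ (by simp [hp, hda])
  have hq' : (SimpleGraph.Walk.cons hb q).IsPath :=
    SimpleGraph.Walk.isPath_of_length_eq_dist _ (by simp [hq, hdb])
  have := congrArg Subtype.val
    ((hT.isAcyclic.subsingleton_path x y).elim ⟨_, hp'⟩ ⟨_, hq'⟩)
  have := congrArg SimpleGraph.Walk.snd this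
  simpa using this

/-- In a tree, the endpoints of an edge are at distances from `r` differing by exactly one. -/
lemma adj_depth {n : ℕ} {G : SimpleGraph (Fin n)} (hT : G.IsTree) (r : Fin n) {a b : Fin n}
    (h : G.Adj a b) : G.dist b r + 1 = G.dist a r ∨ G.dist a r + 1 = G.dist b r := by
  have h1 := hT.dist_ne_of_adj r h
  have h2 := hT.connected.dist_triangle (u := a) (v := b) (w := r)
  have h3 := hT.connected.dist_triangle (u := b) (v := a) (w := r)
  have h4 := SimpleGraph.dist_eq_one_iff_adj.2 h
  rw [SimpleGraph.dist_comm] at h1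
  rw [SimpleGraph.dist_comm (u := r) (v := b)] at h1
  rw [SimpleGraph.dist_comm (u := b) (v := a)] at h3
  omega

/-- The first step from a proper descendant `a` of `w` towards `w` is the parent of `a`,
so it is still a descendant of `w`. -/
lemma anc_step {n : ℕ} {G : SimpleGraph (Fin n)} (hT : G.IsTree) {r w a z : Fin n}
    (h : Anc G r w a) (haz : G.Adj a z) (hz : G.dist z w + 1 = G.dist a w) :
    G.dist z r + 1 = G.dist a r ∧ Anc G r w z := by
  unfold Anc at *
  have := hT.connected.dist_triangle (u := z) (v := w) (w := r)
  have := adj_depth hT r haz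
  omega

/-- An edge leaving the subtree below `w` starts at `w` and goes to its parent. -/
lemma crossing {n : ℕ} {G : SimpleGraph (Fin n)} (hT : G.IsTree) {r w a b : Fin n}
    (hab : G.Adj a b) (ha : Anc G r w a) (hb : ¬ Anc G r w b) :
    a = w ∧ G.dist b r + 1 = G.dist a r := by
  rcases adj_depth hT r hab with h | h
  · refine ⟨?_, h⟩
    by_contra hne
    obtain ⟨z, haz, hz⟩ := exists_closer hT hne
    obtain ⟨h1, h2⟩ := anc_step hT ha haz hz
    exact hb (closer_unique hT haz hab h1 h ▸ h2)
  · exfalso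
    apply hb
    unfold Anc at *
    have h1 := hT.connected.dist_triangle (u := b) (v := a) (w := w)
    have h2 := hT.connected.dist_triangle (u := b) (v := w) (w := r)
    have h4 := SimpleGraph.dist_eq_one_iff_adj.2 hab.symm
    omega

/-! ### Steiner distance as a count of separating edges -/

/-- The non-root vertices `w` having some, but not all, vertices of `U` in the subtree below
them. -/
noncomputable def cutSet {n : ℕ} (G : SimpleGraph (Fin n)) (r : Fin n) (U : Set (Fin n)) :
    Finset (Fin n) :=
  (Finset.univ.erase r).filter fun w => (∃ u ∈ U, Anc G r w u) ∧ ∃ u ∈ U, ¬ Anc G r w u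

/-- Existence of a parent function; its value at the root is unconstrained. -/
lemma exists_parent {n : ℕ} {G : SimpleGraph (Fin n)} (hT : G.IsTree) (r : Fin n) :
    ∃ p : Fin n → Fin n, ∀ w, w ≠ r → G.Adj w (p w) ∧ G.dist (p w) r + 1 = G.dist w r := by
  have : ∀ w, ∃ z, w ≠ r → G.Adj w z ∧ G.dist z r + 1 = G.dist w r := by
    intro w
    by_cases h : w = r
    · exact ⟨w, fun h' => absurd h h'⟩
    · obtain ⟨z, hz⟩ := exists_closer hT h
      exact ⟨z, fun _ => hz⟩
  choose p hp using this
  exact ⟨p, hp⟩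

lemma edge_injOn {n : ℕ} {G : SimpleGraph (Fin n)} {r : Fin n} {p : Fin n → Fin n}
    (hp : ∀ w, w ≠ r → G.Adj w (p w) ∧ G.dist (p w) r + 1 = G.dist w r) (U : Set (Fin n)) :
    Set.InjOn (fun w => s(w, p w)) (cutSet G r U : Set (Fin n)) := by
  intro a ha b hb hab
  have ha' := hp a (by simp [cutSet] at ha; tauto)
  have hb' := hp b (by simp [cutSet] at hb; tauto)
  rcases Sym2.eq_iff.1 hab with h | h
  · exact h.1
  · have h1 := ha'.2
    have h2 := hb'.2
    rw [h.2] at h1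
    rw [← h.1] at h2
    omega

/-- Lower bound: a connected subgraph containing `U` contains the parent edge of every vertex of
`cutSet G r U`. -/
lemma card_le_edges {n : ℕ} {G : SimpleGraph (Fin n)} (hT : G.IsTree) (r : Fin n)
    (U : Set (Fin n)) (H : G.Subgraph) (hH : H.Connected) (hU : U ⊆ H.verts) :
    (cutSet G r U).card ≤ H.edgeSet.ncard := by
  obtain ⟨p, hp⟩ := exists_parent hT r
  rw [← Set.ncard_coe_finset, ← (edge_injOn hp U).ncard_image]
  refine Set.ncard_le_ncard ?_ (Set.toFinite _)
  rintro _ ⟨w, hw, rfl⟩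
  simp only [cutSet, Finset.coe_filter, Finset.mem_erase, Finset.mem_univ, and_true,
    Set.mem_ofPred_eq] at hw
  obtain ⟨hwr, ⟨u, hu, hwu⟩, v, hv, hwv⟩ := hw
  obtain ⟨q⟩ := hH.preconnected.coe ⟨u, hU hu⟩ ⟨v, hU hv⟩
  -- a walk in `H` from inside the subtree below `w` to the outside uses a crossing edge
  obtain ⟨e, -, h1, h2⟩ := q.exists_boundary_dart {x | Anc G r w x} hwu hwv
  have hadj : H.Adj e.fst e.snd := e.adj
  obtain ⟨h3, h4⟩ := crossing hT (H.adj_sub hadj) h1 h2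
  have h5 : p w = e.snd := by
    obtain ⟨h6, h7⟩ := hp w hwr
    have h8 := H.adj_sub hadj
    rw [h3] at h8 h4
    exact closer_unique hT h6 h8 h7 h4
  show H.Adj w (p w)
  rw [h5, ← h3]
  exact hadj

/-- Upper bound: the vertices that are descendants of the deepest common ancestor `m` of `U` and
ancestors of some element of `U` induce a connected subgraph. The lower endpoint of each of its
edges is strictly deeper than `m`, hence is not a common ancestor of `U`. -/
lemma exists_subgraph {n : ℕ} {G : SimpleGraph (Fin n)} (hT : G.IsTree) (r : Fin n)
    (U : Set (Fin n)) (hne : U.Nonempty) :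
    ∃ H : G.Subgraph, H.Connected ∧ U ⊆ H.verts ∧ H.edgeSet.ncard ≤ (cutSet G r U).card := by
  obtain ⟨m, hm, hmax⟩ := (Finset.univ.filter fun x => ∀ u ∈ U, Anc G r x u).exists_max_image
    (fun x => G.dist x r)
    ⟨r, Finset.mem_filter.2 ⟨Finset.mem_univ r, fun u _ => by simp [Anc]⟩⟩
  simp only [Finset.mem_filter, Finset.mem_univ, true_and] at hm hmax
  obtain ⟨u₀, hu₀⟩ := hne
  let s : Set (Fin n) := {x | Anc G r m x ∧ ∃ u ∈ U, Anc G r x u}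
  let H : G.Subgraph := (⊤ : G.Subgraph).induce s
  have hms : m ∈ s := ⟨by simp [Anc], u₀, hu₀, hm u₀ hu₀⟩
  have hreach : ∀ (d : ℕ) (x : Fin n) (hx : x ∈ s), G.dist x m = d →
      H.coe.Reachable ⟨x, hx⟩ ⟨m, hms⟩ := by
    intro d
    induction d with
    | zero =>
      intro x hx hd
      have : x = m := hT.connected.dist_eq_zero_iff.1 hd
      subst this
      exact SimpleGraph.Reachable.refl _
    | succ d ih =>
      intro x hx hd
      have hxm : x ≠ m := by
        rintro rfl
        simp at hd
      obtain ⟨z, hxz, hz⟩ := exists_closer hT hxm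
      obtain ⟨h1, h2⟩ := anc_step hT hx.1 hxz hz
      have hzs : z ∈ s := by
        refine ⟨h2, ?_⟩
        obtain ⟨u, hu, hxu⟩ := hx.2
        refine ⟨u, hu, ?_⟩
        unfold Anc at *
        have h3 := hT.connected.dist_triangle (u := u) (v := x) (w := z)
        have h4 := hT.connected.dist_triangle (u := u) (v := z) (w := r)
        have h5 := SimpleGraph.dist_eq_one_iff_adj.2 hxz
        omega
      refine SimpleGraph.Reachable.trans (SimpleGraph.Adj.reachable ?_) (ih z hzs (by omega))
      show H.Adj x z
      exact ⟨hx, hzs, hxz⟩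
  refine ⟨H, ?_, fun u hu => ⟨hm u hu, u, hu, by simp [Anc]⟩, ?_⟩
  · rw [SimpleGraph.Subgraph.connected_iff]
    refine ⟨⟨?_⟩, ⟨m, hms⟩⟩
    rintro ⟨x, hx⟩ ⟨y, hy⟩
    exact (hreach _ x hx rfl).trans (hreach _ y hy rfl).symm
  · obtain ⟨p, hp⟩ := exists_parent hT r
    rw [← Set.ncard_coe_finset, ← (edge_injOn hp U).ncard_image]
    refine Set.ncard_le_ncard ?_ (Set.toFinite _)
    have key : ∀ a b, a ∈ s → b ∈ s → G.Adj a b → G.dist b r + 1 = G.dist a r →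
        a ∈ cutSet G r U ∧ p a = b := by
      intro a b ha hb hab hd
      have har : a ≠ r := by
        rintro rfl
        simp at hd
      refine ⟨?_, closer_unique hT (hp a har).1 hab (hp a har).2 hd⟩
      simp only [cutSet, Finset.mem_filter, Finset.mem_erase, Finset.mem_univ, and_true]
      refine ⟨har, ha.2, ?_⟩
      by_contra! hall
      have h1 := hmax a hall
      have h2 := hb.1
      unfold Anc at h2
      omega
    intro e
    induction e with
    | h a b =>
      intro he
      obtain ⟨ha, hb, hab⟩ : a ∈ s ∧ b ∈ s ∧ G.Adj a b := he
      rcases adj_depth hT r hab with h | h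
      · obtain ⟨h1, h2⟩ := key a b ha hb hab h
        exact ⟨a, h1, by simp [h2]⟩
      · obtain ⟨h1, h2⟩ := key b a hb ha hab.symm h
        exact ⟨b, h1, by simp [h2, Sym2.eq_swap]⟩

lemma steinerDist_eq {n : ℕ} {G : SimpleGraph (Fin n)} (hT : G.IsTree) (r : Fin n)
    (U : Set (Fin n)) (hne : U.Nonempty) :
    steinerDist G U = (cutSet G r U).card := by
  obtain ⟨H, h1, h2, h3⟩ := exists_subgraph hT r U hne
  apply le_antisymm
  · exact le_trans (Nat.sInf_le (m := H.edgeSet.ncard) ⟨H, h1, h2, rfl⟩) h3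
  · refine le_csInf ⟨_, H, h1, h2, rfl⟩ ?_
    rintro _ ⟨K, h4, h5, rfl⟩
    exact card_le_edges hT r U K h4 h5

/-! ### Multilinear algebra -/

/-- The multilinear expansion for one non-root vertex, whose parity condition turns
`-(1 + (-1) ^ k)` into `-2`. -/
lemma expand {k : ℕ} (hk : 2 ≤ k) (hke : Even k) (a s : Fin k → ℝ) :
    ∏ j, s j - ∏ j, a j - ∏ j, (s j - a j) =
      (∑ t ∈ Finset.Icc 1 (k - 1), (-1 : ℝ) ^ (t - 1) *
        ∑ S ∈ Finset.powersetCard t (Finset.univ : Finset (Fin k)),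
          (∏ j ∈ S, a j) * ∏ j ∈ Sᶜ, s j) - 2 * ∏ j, a j := by
  have h : ∏ j, (s j - a j) = ∑ t ∈ Finset.range (k + 1), (-1 : ℝ) ^ t *
        ∑ S ∈ Finset.powersetCard t (Finset.univ : Finset (Fin k)),
          (∏ j ∈ S, a j) * ∏ j ∈ Sᶜ, s j := by
    have h0 : ∀ j, s j - a j = -a j + s j := fun j => by ring
    simp_rw [h0]
    rw [Finset.prod_add, Finset.sum_powerset]
    simp only [Finset.card_univ, Fintype.card_fin]
    refine Finset.sum_congr rfl fun t _ => ?_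
    rw [Finset.mul_sum]
    refine Finset.sum_congr rfl fun S hS => ?_
    rw [Finset.prod_neg, (Finset.mem_powersetCard.1 hS).2, Finset.compl_eq_univ_sdiff]
    ring
  obtain ⟨l, rfl⟩ : ∃ l, k = l + 1 := ⟨k - 1, by omega⟩
  rw [h, Finset.sum_range_succ, Finset.sum_range_succ', hke.neg_one_pow]
  have h1 : Finset.powersetCard (l + 1) (Finset.univ : Finset (Fin (l + 1))) =
      {Finset.univ} := by
    have h1' := Finset.powersetCard_self (Finset.univ : Finset (Fin (l + 1)))
    rwa [Finset.card_fin] at h1'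
  have h2 : Finset.Icc 1 (l + 1 - 1) = Finset.Ico 1 (l + 1) := by
    ext
    simp
  rw [h1, h2, Finset.sum_Ico_eq_sum_range]
  simp only [Finset.powersetCard_zero, Finset.sum_singleton, Finset.prod_empty,
    Finset.compl_empty, Finset.compl_univ, pow_zero, add_tsub_cancel_right,
    add_tsub_cancel_left]
  have h3 : ∀ x ∈ Finset.range l, (-1 : ℝ) ^ x *
      ∑ S ∈ Finset.powersetCard (1 + x) (Finset.univ : Finset (Fin (l + 1))),
          (∏ j ∈ S, a j) * ∏ j ∈ Sᶜ, s j = - ((-1 : ℝ) ^ (x + 1) *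
      ∑ S ∈ Finset.powersetCard (x + 1) (Finset.univ : Finset (Fin (l + 1))),
          (∏ j ∈ S, a j) * ∏ j ∈ Sᶜ, s j) := by
    intro x _
    rw [add_comm 1 x]
    ring
  rw [Finset.sum_congr rfl h3, Finset.sum_neg_distrib]
  ring

/-- The indicator of `P` holding for some but not all indices, as a combination of products. -/
lemma indicator_eq {k : ℕ} (hk : 2 ≤ k) (P : Fin k → Prop) :
    (if (∃ j, P j) ∧ ∃ j, ¬ P j then (1 : ℝ) else 0) =
      1 - ∏ j, (if P j then (1 : ℝ) else 0) - ∏ j, (if P j then (0 : ℝ) else 1) := by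
  let j₀ : Fin k := ⟨0, by omega⟩
  by_cases h1 : ∃ j, P j <;> by_cases h2 : ∃ j, ¬ P j
  · obtain ⟨a, ha⟩ := h1
    obtain ⟨b, hb⟩ := h2
    have h3 : ∏ j, (if P j then (1 : ℝ) else 0) = 0 :=
      Finset.prod_eq_zero (Finset.mem_univ b) (if_neg hb)
    have h4 : ∏ j, (if P j then (0 : ℝ) else 1) = 0 :=
      Finset.prod_eq_zero (Finset.mem_univ a) (if_pos ha)
    rw [if_pos ⟨⟨a, ha⟩, b, hb⟩, h3, h4]
    ring
  · rw [if_neg (fun h => h2 h.2)]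
    push Not at h2
    simp [h2, show k ≠ 0 by omega]
  · rw [if_neg (fun h => h1 h.1)]
    push Not at h1
    simp [h1, show k ≠ 0 by omega]
  · push Not at h1 h2
    exact absurd (h2 j₀) (h1 j₀)

lemma sum_prod {n k : ℕ} (f : Fin k → Fin n → ℝ) :
    ∑ i : Fin k → Fin n, ∏ j, f j (i j) = ∏ j, ∑ x, f j x := by
  rw [Finset.prod_univ_sum, Fintype.piFinset_univ]

/-! ### The Steiner form -/

theorem stmt9 (n k : ℕ) (hn : 2 ≤ n) (hk : 2 ≤ k) (hke : Even k)
    (G : SimpleGraph (Fin n)) (hT : G.IsTree)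
    (c : Fin k → Fin n → ℝ) :
    let vn : Fin n := ⟨n - 1, by omega⟩
    let d : Fin k → Fin n → ℝ := fun j => (zetaMatrix G vn).mulVec (c j)
    steinerForm G k c =
      (∑ t ∈ Finset.Icc 1 (k - 1), (-1 : ℝ) ^ (t - 1) *
        ∑ S ∈ Finset.powersetCard t (Finset.univ : Finset (Fin k)),
          ∑ w ∈ Finset.univ.erase vn,
            (∏ j ∈ S, d j w) * ∏ j ∈ Sᶜ, d j vn)
      - 2 * ∑ w ∈ Finset.univ.erase vn, ∏ j, d j w := by
  intro vn d
  have hd : ∀ j w, d j w = ∑ y, (if Anc G vn w y then c j y else 0) := by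
    intro j w
    simp only [d, zetaMatrix, Matrix.mulVec, dotProduct, Matrix.of_apply, ite_mul, one_mul,
      zero_mul]
    refine Finset.sum_congr rfl fun y _ => ?_
    by_cases h : Anc G vn w y
    · exact (if_pos h).trans (if_pos h).symm
    · exact (if_neg h).trans (if_neg h).symm
  have hdn : ∀ j, d j vn = ∑ y, c j y := by
    intro j
    rw [hd]
    simp [Anc]
  have hsub : ∀ j w, d j vn - d j w = ∑ y, (if Anc G vn w y then 0 else c j y) := by
    intro j w
    rw [hd j w, hdn, ← Finset.sum_sub_distrib]
    refine Finset.sum_congr rfl fun y _ => ?_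
    split_ifs <;> simp
  have hS : ∀ i : Fin k → Fin n, (steinerDist G (Set.range i) : ℝ) * ∏ j, c j (i j) =
      ∑ w ∈ Finset.univ.erase vn, (∏ j, c j (i j)
        - ∏ j, (if Anc G vn w (i j) then c j (i j) else 0)
        - ∏ j, (if Anc G vn w (i j) then 0 else c j (i j))) := by
    intro i
    rw [steinerDist_eq hT vn _ ⟨_, Set.mem_range_self ⟨0, by omega⟩⟩, cutSet,
      Finset.card_filter, Nat.cast_sum, Finset.sum_mul]
    refine Finset.sum_congr rfl fun w _ => ?_
    simp only [Set.exists_range_iff, Nat.cast_ite, Nat.cast_one, Nat.cast_zero]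
    rw [indicator_eq hk (fun j => Anc G vn w (i j)), sub_mul, sub_mul, one_mul,
      ← Finset.prod_mul_distrib, ← Finset.prod_mul_distrib]
    simp only [ite_mul, one_mul, zero_mul]
  have hL : steinerForm G k c = ∑ w ∈ Finset.univ.erase vn,
      (∏ j, d j vn - ∏ j, d j w - ∏ j, (d j vn - d j w)) := by
    unfold steinerForm
    rw [Finset.sum_congr rfl fun i _ => hS i, Finset.sum_comm]
    refine Finset.sum_congr rfl fun w _ => ?_
    rw [Finset.sum_sub_distrib, Finset.sum_sub_distrib, sum_prod c,
      sum_prod (fun j y => if Anc G vn w y then c j y else 0),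
      sum_prod (fun j y => if Anc G vn w y then 0 else c j y)]
    simp_rw [hsub, hdn, hd]
  rw [hL, Finset.sum_congr rfl fun w _ => expand hk hke (fun j => d j w) (fun j => d j vn),
    Finset.sum_sub_distrib, Finset.sum_comm, ← Finset.mul_sum]
  congr 1
  refine Finset.sum_congr rfl fun t _ => ?_
  rw [← Finset.mul_sum, Finset.sum_comm]
end

section
/- Let T be a tree on vertex set {1,...,n} with n ≥ 2, let M be its distance matrix, let A = (2/n)J_n − I_n, and let D = MA + AM. Then D is symmetric and positive definite: x^T D x > 0 for every nonzero x ∈ ℝ^n. -/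
/-!
Write `x = c • 1 + z` with `∑ z = 0`. As `A` fixes the all-ones vector and negates vectors of sum
zero, `xᵀ D x = 2 (c² · 1ᵀ M 1 - zᵀ M z)`. The number `1ᵀ M 1` is positive because `n ≥ 2`, so the
claim reduces to the strict conditional negativity of tree distances: `zᵀ M z < 0` for every
nonzero `z` of sum zero (`dist_form_neg`).

That is shown by removing a leaf `l` with neighbour `p`. Since `d(l, j) = d(p, j) + 1` for `j ≠ l`,
moving the mass `z l` onto `p` gives a vector `z'` of sum zero on the smaller tree with
`zᵀ M z = z'ᵀ M' z' - 2 (z l)²`.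
-/

open Matrix

lemma sum_eq_add_sum_compl {V : Type*} [Fintype V] [DecidableEq V] (l : V) (f : V → ℝ) :
    ∑ i, f i = f l + ∑ i : ({l}ᶜ : Set V), f i := by
  rw [Fintype.sum_eq_add_sum_compl l f]
  congr 1
  exact Finset.sum_subtype _ (by simp) f

/-- Every walk out of a vertex `l` with unique neighbour `p` starts with the edge to `p`. -/
lemma dist_leaf {V : Type*} {G : SimpleGraph V} (hG : G.Connected) {l p : V} (hp : G.Adj l p)
    (hu : ∀ q, G.Adj l q → q = p) (j : V) (hj : j ≠ l) : G.dist l j = G.dist p j + 1 := by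
  apply le_antisymm
  · obtain ⟨w, hw⟩ := hG.exists_walk_length_eq_dist p j
    simpa [hw] using SimpleGraph.dist_le (SimpleGraph.Walk.cons hp w)
  · obtain ⟨w, hw⟩ := hG.exists_walk_length_eq_dist l j
    cases w with
    | nil => exact absurd rfl hj
    | cons h w =>
      obtain rfl := hu _ h
      have := SimpleGraph.dist_le w
      simp only [SimpleGraph.Walk.length_cons] at hw
      omega

/-- Deleting a leaf does not change the distances between the remaining vertices, since a shortest
path does not run through a leaf. -/
lemma dist_induce_compl_leaf {V : Type*} {G : SimpleGraph V} (hG : G.Connected) {l : V}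
    (hl : (G.neighborSet l).Subsingleton) (hGl : (G.induce {l}ᶜ).Connected)
    (i j : ({l}ᶜ : Set V)) : (G.induce {l}ᶜ).dist i j = G.dist i j := by
  apply le_antisymm
  · obtain ⟨w, hw, hlen⟩ := hG.exists_path_of_dist (i : V) j
    have hs : ∀ x ∈ w.support, x ∈ ({l}ᶜ : Set V) := by
      rintro x hx rfl
      exact hw.not_mem_support_of_subsingleton_neighborSet (Ne.symm i.2) (Ne.symm j.2) hl hx
    have h1 := SimpleGraph.dist_le (w.induce _ hs)
    have h2 := congrArg SimpleGraph.Walk.length (w.map_induce hs)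
    rw [SimpleGraph.Walk.length_map] at h2
    exact h1.trans (h2.trans hlen).le
  · obtain ⟨w, hw⟩ := hGl.exists_walk_length_eq_dist i j
    rw [← hw, ← SimpleGraph.Walk.length_map (SimpleGraph.Embedding.induce _).toHom]
    exact SimpleGraph.dist_le _

/-- The distance form of a finite tree is negative definite on vectors of sum zero. -/
lemma dist_form_neg (k : ℕ) : ∀ (V : Type) [Fintype V] (G : SimpleGraph V), Fintype.card V = k →
    G.IsTree → ∀ z : V → ℝ, ∑ i, z i = 0 → z ≠ 0 →
    ∑ i, ∑ j, z i * z j * (G.dist i j : ℝ) < 0 := by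
  classical
  induction k with
  | zero =>
    intro V _ G hk _ z _ hz
    have := Fintype.card_eq_zero_iff.1 hk
    exact absurd (Subsingleton.elim _ _) hz
  | succ k ih =>
    intro V _ G hk hT z hs hz
    rcases subsingleton_or_nontrivial V with hV | hV
    · exfalso
      apply hz
      funext i
      rwa [Fintype.sum_subsingleton _ i] at hs
    obtain ⟨l, hl⟩ := hT.exists_vert_degree_one_of_nontrivial
    have hGl := hT.connected.induce_compl_singleton_of_degree_eq_one hl
    obtain ⟨p, hp, hu⟩ := SimpleGraph.degree_eq_one_iff_existsUnique_adj.1 hl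
    have hsub : (G.neighborSet l).Subsingleton := fun a ha b hb => (hu a ha).trans (hu b hb).symm
    have hpl : p ∈ ({l}ᶜ : Set V) := hp.ne'
    have hTl : (G.induce {l}ᶜ).IsTree := ⟨hGl, hT.isAcyclic.induce _⟩
    have hcard : Fintype.card ({l}ᶜ : Set V) = k := by
      rw [Fintype.card_compl_set]; simp [hk]
    let P : ({l}ᶜ : Set V) := ⟨p, hpl⟩
    let z' : ({l}ᶜ : Set V) → ℝ := fun i => z i + if i = P then z l else 0
    rw [sum_eq_add_sum_compl l] at hs
    have hs' : ∑ i, z' i = 0 := by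
      simp only [z', Finset.sum_add_distrib, Finset.sum_ite_eq', Finset.mem_univ, if_true]
      linarith
    have hform : ∑ i, ∑ j, z i * z j * (G.dist i j : ℝ) =
        ∑ i, ∑ j, z' i * z' j * ((G.induce {l}ᶜ).dist i j : ℝ) - 2 * z l ^ 2 := by
      have hd : ∀ j : ({l}ᶜ : Set V), (G.dist l j : ℝ) = G.dist p j + 1 := fun j => by
        exact_mod_cast dist_leaf hT.connected hp hu j j.2
      have hL : ∑ i, ∑ j, z i * z j * (G.dist i j : ℝ) =
          2 * z l * ∑ j : ({l}ᶜ : Set V), z j * (G.dist p j : ℝ)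
          + 2 * z l * ∑ j : ({l}ᶜ : Set V), z j
          + ∑ i : ({l}ᶜ : Set V), ∑ j : ({l}ᶜ : Set V), z i * z j * (G.dist i j : ℝ) := by
        rw [sum_eq_add_sum_compl l]
        simp_rw [sum_eq_add_sum_compl l (fun j => z _ * z j * (G.dist _ j : ℝ))]
        simp only [SimpleGraph.dist_self, Nat.cast_zero, mul_zero, zero_add,
          Finset.sum_add_distrib, SimpleGraph.dist_comm (v := l), hd]
        rw [← add_assoc]
        congr 1
        simp only [Finset.mul_sum, ← Finset.sum_add_distrib]
        exact Finset.sum_congr rfl fun i _ => by ring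
      have hR : ∑ i, ∑ j, z' i * z' j * ((G.induce {l}ᶜ).dist i j : ℝ) =
          2 * z l * ∑ j : ({l}ᶜ : Set V), z j * (G.dist p j : ℝ)
          + ∑ i : ({l}ᶜ : Set V), ∑ j : ({l}ᶜ : Set V), z i * z j * (G.dist i j : ℝ) := by
        simp only [z', dist_induce_compl_leaf hT.connected hsub hGl, add_mul, mul_add,
          Finset.sum_add_distrib, ite_mul, mul_ite, zero_mul, mul_zero, Finset.sum_ite_eq',
          Finset.mem_univ, if_true, Finset.sum_ite_irrel, Finset.sum_const_zero]
        simp only [P, SimpleGraph.dist_self, Nat.cast_zero, mul_zero, add_zero,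
          SimpleGraph.dist_comm (v := p)]
        rw [add_assoc, add_comm]
        congr 1
        simp only [Finset.mul_sum, ← Finset.sum_add_distrib]
        exact Finset.sum_congr rfl fun i _ => by ring
      rw [hL, hR, show ∑ j : ({l}ᶜ : Set V), z j = - z l by linarith]
      ring
    rw [hform]
    by_cases hz' : z' = 0
    · have hl0 : z l ≠ 0 := by
        intro h0
        apply hz
        funext i
        by_cases hi : i = l
        · simpa [hi] using h0
        · simpa [z', h0] using congrFun hz' ⟨i, hi⟩
      have := pow_pos (abs_pos.2 hl0) 2
      rw [sq_abs] at this
      simp only [hz', Pi.zero_apply, zero_mul, Finset.sum_const_zero]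
      linarith
    · have := ih _ _ hcard hTl z' hs' hz'
      nlinarith [sq_nonneg (z l)]

theorem stmt14 (n : ℕ) (hn : 2 ≤ n)
    (G : SimpleGraph (Fin n)) (hT : G.IsTree) :
    let M : Matrix (Fin n) (Fin n) ℝ := Matrix.of fun i j => (G.dist i j : ℝ)
    let A : Matrix (Fin n) (Fin n) ℝ := (2 / (n : ℝ)) • Matrix.of (fun _ _ => 1) - 1
    let D : Matrix (Fin n) (Fin n) ℝ := M * A + A * M
    D.IsSymm ∧ ∀ x : Fin n → ℝ, x ≠ 0 → 0 < x ⬝ᵥ D.mulVec x := by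
  intro M A D
  have hM : Mᵀ = M := by ext i j; simp [M, SimpleGraph.dist_comm]
  have hA : Aᵀ = A := by ext i j; simp [A, Matrix.one_apply, eq_comm]
  refine ⟨?_, fun x hx => ?_⟩
  · simp only [Matrix.IsSymm, D, Matrix.transpose_add, Matrix.transpose_mul, hM, hA]
    exact add_comm _ _
  have hn0 : (n : ℝ) ≠ 0 := by positivity
  let c : ℝ := (∑ i, x i) / n
  let u : Fin n → ℝ := fun _ => 1
  let z : Fin n → ℝ := x - c • u
  have hz : ∑ i, z i = 0 := by
    simp only [z, u, c, Pi.sub_apply, Pi.smul_apply, smul_eq_mul, mul_one, Finset.sum_sub_distrib,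
      Finset.sum_const, Finset.card_univ, Fintype.card_fin, nsmul_eq_mul]
    field_simp
    ring
  have hxz : x = c • u + z := by simp [z]
  have hAx : A *ᵥ x = c • u - z := by
    funext i
    have : ∑ j, x j = c * n := by simp only [c]; field_simp
    simp only [A, Matrix.sub_mulVec, Matrix.smul_mulVec, Matrix.one_mulVec]
    simp only [Pi.sub_apply, Pi.smul_apply, Matrix.mulVec, dotProduct, Matrix.of_apply, one_mul,
      smul_eq_mul, this, z, u]
    field_simp
    ring
  have hsymm : ∀ v w : Fin n → ℝ, v ⬝ᵥ M *ᵥ w = w ⬝ᵥ M *ᵥ v := fun v w => by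
    rw [Matrix.dotProduct_mulVec, ← Matrix.mulVec_transpose, hM, dotProduct_comm]
  have hexp : ∀ v : Fin n → ℝ, v ⬝ᵥ M *ᵥ v = ∑ i, ∑ j, v i * v j * (G.dist i j : ℝ) := fun v => by
    simp only [dotProduct, Matrix.mulVec, M, Matrix.of_apply, Finset.mul_sum]
    exact Finset.sum_congr rfl fun i _ => Finset.sum_congr rfl fun j _ => by ring
  have hD : x ⬝ᵥ D *ᵥ x = 2 * (c ^ 2 * (u ⬝ᵥ M *ᵥ u) - z ⬝ᵥ M *ᵥ z) := by
    have h1 : x ⬝ᵥ D *ᵥ x = 2 * (x ⬝ᵥ M *ᵥ (A *ᵥ x)) := by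
      have h2 : x ⬝ᵥ A *ᵥ (M *ᵥ x) = (A *ᵥ x) ⬝ᵥ M *ᵥ x := by
        rw [Matrix.dotProduct_mulVec, ← Matrix.mulVec_transpose, hA]
      simp only [D, Matrix.add_mulVec, dotProduct_add, ← Matrix.mulVec_mulVec]
      rw [h2, hsymm (A *ᵥ x) x]
      ring
    rw [h1, hAx]
    nth_rewrite 1 [hxz]
    simp only [Matrix.mulVec_sub, Matrix.mulVec_smul, dotProduct_sub, add_dotProduct,
      smul_dotProduct, dotProduct_smul, smul_eq_mul, hsymm z u]
    ring
  have hu : 0 < u ⬝ᵥ M *ᵥ u := by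
    rw [hexp]
    let a : Fin n := ⟨0, by omega⟩
    let b : Fin n := ⟨1, by omega⟩
    have hab : a ≠ b := by simp [a, b]
    have hd : (0 : ℝ) < G.dist a b := by exact_mod_cast hT.connected.pos_dist_of_ne hab
    have h0 : ∀ i j, 0 ≤ u i * u j * (G.dist i j : ℝ) := fun i j => by simp [u]
    calc 0 < u a * u b * (G.dist a b : ℝ) := by simpa [u] using hd
      _ ≤ ∑ j, u a * u j * (G.dist a j : ℝ) :=
        Finset.single_le_sum (f := fun j => u a * u j * (G.dist a j : ℝ))
          (fun j _ => h0 a j) (Finset.mem_univ b)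
      _ ≤ _ := Finset.single_le_sum (f := fun i => ∑ j, u i * u j * (G.dist i j : ℝ))
          (fun i _ => Finset.sum_nonneg fun j _ => h0 i j) (Finset.mem_univ a)
  rw [hD]
  by_cases hz0 : z = 0
  · have hc : c ≠ 0 := by
      intro hc
      apply hx
      rw [hxz, hz0, hc]
      simp
    rw [hz0]
    simp only [zero_dotProduct, sub_zero]
    positivity
  · have h1 := dist_form_neg n (Fin n) G (Fintype.card_fin n) hT z hz hz0
    rw [← hexp] at h1
    have : 0 ≤ c ^ 2 * (u ⬝ᵥ M *ᵥ u) := by positivity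
    linarith
end

section
/- Let T be a tree on vertex set {1,...,n} with n ≥ 2, let M be its distance matrix, let A = (2/n)J_n − I_n, and let C = MA. Then C is positive definite in the sense that x^T C x > 0 for every nonzero x ∈ ℝ^n. -/
/-!
Each edge `e` of the tree splits the vertices into two sides, and `dist i j` counts the edges that
separate `i` from `j`. Let `b e` be the 0/1 indicator of the side of `e` away from a fixed root, so
that `dist i j = ∑ e, (b e i + b e j - 2 * b e i * b e j)`. With `s = ∑ i, x i`,
`X e = ∑ i, b e i * x i` and `k e = ∑ i, b e i` (the size of that side), substituting this into the
quadratic form gives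

`xᵀ C x = ∑ e, (2 * (X e - s * k e / n) ^ 2 + 2 * s ^ 2 * k e * (n - k e) / n ^ 2)`,

which is `TreeDist.form_eq`. All terms are nonnegative since `0 < k e < n`. If the sum vanishes,
then `s = 0` and hence every `X e = 0`. Were `x` nonzero, take `v` in its support farthest from the
root: if `v` is the root then `s = x v`, and otherwise the edge `e` from `v` towards the root
satisfies `X e = x v` (`TreeDist.exists_parent_edge`); both contradict `x v ≠ 0`.
-/

open Matrix SimpleGraph

namespace TreeDist

variable {V : Type*} {G : SimpleGraph V}

/-- In a tree, deleting the edge `e` disconnects `i` from `j` exactly when `e` lies on the path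
from `i` to `j`. -/
lemma not_reachable_iff (hT : G.IsTree) {i j : V} (p : G.Walk i j) (hp : p.IsPath)
    (e : Sym2 V) : ¬ (G.deleteEdges {e}).Reachable i j ↔ e ∈ p.edges := by
  classical
  constructor
  · intro h
    by_contra he
    exact h (p.toDeleteEdge e he).reachable
  · rintro he ⟨q⟩
    have hq : ((q.toPath : (G.deleteEdges {e}).Walk i j).mapLe (G.deleteEdges_le {e})).IsPath :=
      (q.toPath.2).mapLe _
    have h := (hT.existsUnique_path i j).unique hp hq
    rw [h, Walk.edges_mapLe_eq_edges] at he
    have := Walk.edges_subset_edgeSet _ he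
    simp at this

/-- Deleting an edge from a tree leaves at most two connected components. -/
lemma reachable_or (hT : G.IsTree) (e : Sym2 V) {a b c : V}
    (hab : ¬ (G.deleteEdges {e}).Reachable a b) (hbc : ¬ (G.deleteEdges {e}).Reachable b c) :
    (G.deleteEdges {e}).Reachable a c := by
  induction e with | _ v w =>
  have key : ∀ u, (G.deleteEdges {s(v, w)}).Reachable u v ∨
      (G.deleteEdges {s(v, w)}).Reachable u w := by
    intro u
    obtain ⟨p⟩ := hT.1 u v
    induction p with
    | nil => exact Or.inl .rfl
    | @cons x y z hxy p ih =>
      by_cases h : s(x, y) = s(z, w)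
      · rcases Sym2.eq_iff.1 h with ⟨rfl, _⟩ | ⟨rfl, _⟩
        · exact Or.inl .rfl
        · exact Or.inr .rfl
      · have hadj : (G.deleteEdges {s(z, w)}).Adj x y := by
          simpa [deleteEdges_adj, hxy] using h
        exact (ih hab hbc).imp hadj.reachable.trans hadj.reachable.trans
  have ha := key a
  have hb := key b
  have hc := key c
  have := @Reachable.symm _ (G.deleteEdges {s(v, w)})
  have := @Reachable.trans _ (G.deleteEdges {s(v, w)})
  grind

/-- The distance in a tree is the number of edges whose deletion separates the two vertices. -/
lemma dist_eq (hT : G.IsTree) [Fintype G.edgeSet] (i j : V) (P : Sym2 V → Prop) [DecidablePred P]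
    (hP : ∀ e, P e ↔ ¬ (G.deleteEdges {e}).Reachable i j) :
    G.dist i j = ∑ e ∈ G.edgeFinset, if P e then 1 else 0 := by
  classical
  obtain ⟨p, hp, hl⟩ := hT.1.exists_path_of_dist i j
  rw [← hl, ← Walk.length_edges, ← List.toFinset_card_of_nodup hp.isTrail.edges_nodup,
    Finset.sum_boole, Nat.cast_id]
  congr 1
  ext e
  have := @Walk.edges_subset_edgeSet _ _ _ _ p e
  simp [hP, not_reachable_iff hT p hp]
  tauto

/-- Root the tree at `r`. For `v ≠ r`, the edge from `v` towards the root cuts off `v` together with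
vertices strictly farther from the root than `v`. -/
lemma exists_parent_edge (hT : G.IsTree) {r v : V} (hv : v ≠ r) :
    ∃ e ∈ G.edgeSet, ¬ (G.deleteEdges {e}).Reachable r v ∧
      ∀ u, u ≠ v → ¬ (G.deleteEdges {e}).Reachable r u → G.dist r v < G.dist r u := by
  classical
  obtain ⟨p, hp, hl⟩ := hT.1.exists_path_of_dist r v
  have hnil : ¬ p.Nil := fun h => hv h.eq.symm
  have he : s(p.penultimate, v) ∈ p.edges := p.mk_penultimate_end_mem_edges hnil
  refine ⟨_, p.edges_subset_edgeSet he, (not_reachable_iff hT p hp _).2 he, fun u hu h => ?_⟩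
  obtain ⟨q, hq, hql⟩ := hT.1.exists_path_of_dist r u
  have hvq := q.snd_mem_support_of_mem_edges ((not_reachable_iff hT q hq _).1 h)
  have h1 := q.length_takeUntil_lt_length hvq hu.symm
  have h2 := dist_le (q.takeUntil v hvq)
  omega

/-- The quadratic form as a sum of terms indexed by `E`, for any `D` of the shape that the distance
has when expressed through the indicators of the sides of the edges. -/
lemma form_eq {n : ℕ} (hn : (n : ℝ) ≠ 0) {E : Type*} (S : Finset E) (b : E → Fin n → ℝ)
    (D : Fin n → Fin n → ℝ)
    (hD : ∀ i j, D i j = ∑ e ∈ S, (b e i + b e j - 2 * b e i * b e j)) (x : Fin n → ℝ) :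
    x ⬝ᵥ ((Matrix.of D) * ((2 / (n : ℝ)) • Matrix.of (fun _ _ => 1) - 1)) *ᵥ x =
      ∑ e ∈ S, (2 * ((∑ i, b e i * x i) - (∑ i, x i) * (∑ i, b e i) / n) ^ 2
        + 2 * (∑ i, x i) ^ 2 * (∑ i, b e i) * (n - ∑ i, b e i) / n ^ 2) := by
  set s := ∑ i, x i with hs
  have hA : ((2 / (n : ℝ)) • Matrix.of (fun _ _ => (1 : ℝ)) - 1 : Matrix (Fin n) (Fin n) ℝ) *ᵥ x
      = fun j => 2 * s / n - x j := by
    ext j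
    rw [Matrix.sub_mulVec, Matrix.smul_mulVec, Matrix.one_mulVec]
    simp [Matrix.mulVec, dotProduct, ← hs]
    ring
  rw [← Matrix.mulVec_mulVec, hA]
  have hL : x ⬝ᵥ Matrix.of D *ᵥ (fun j => 2 * s / n - x j) = ∑ e ∈ S, ∑ i, ∑ j,
      x i * ((b e i + b e j - 2 * b e i * b e j) * (2 * s / n - x j)) := by
    simp only [dotProduct, Matrix.mulVec, Matrix.of_apply, hD, Finset.sum_mul, Finset.mul_sum]
    rw [Finset.sum_congr rfl (fun i _ => Finset.sum_comm), Finset.sum_comm]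
  rw [hL]
  refine Finset.sum_congr rfl fun e _ => ?_
  set X := ∑ i, b e i * x i with hX
  set k := ∑ i, b e i with hk
  have hY : ∑ j, (2 * s / n - x j) = s := by
    rw [Finset.sum_sub_distrib, ← hs]
    simp
    field_simp
    ring
  have hYe : ∑ j, b e j * (2 * s / n - x j) = 2 * s / n * k - X := by
    simp only [mul_sub, Finset.sum_sub_distrib, ← hX, ← Finset.sum_mul, ← hk]
    ring
  clear_value s X k
  have hinner : ∀ i, ∑ j, x i * ((b e i + b e j - 2 * b e i * b e j) * (2 * s / n - x j)) =
      b e i * x i * s + x i * (2 * s / n * k - X) - 2 * (b e i * x i) * (2 * s / n * k - X) := by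
    intro i
    trans b e i * x i * ∑ j, (2 * s / n - x j) + x i * ∑ j, b e j * (2 * s / n - x j)
      - 2 * (b e i * x i) * ∑ j, b e j * (2 * s / n - x j)
    swap
    · rw [hY, hYe]
    rw [Finset.mul_sum, Finset.mul_sum, Finset.mul_sum, ← Finset.sum_add_distrib,
      ← Finset.sum_sub_distrib]
    exact Finset.sum_congr rfl fun j _ => by ring
  rw [Finset.sum_congr rfl fun i _ => hinner i, Finset.sum_sub_distrib, Finset.sum_add_distrib,
    ← Finset.sum_mul, ← Finset.sum_mul, ← Finset.sum_mul, ← Finset.mul_sum, ← hX, ← hs]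
  field_simp
  ring

end TreeDist

theorem stmt15 (n : ℕ) (hn : 2 ≤ n)
    (G : SimpleGraph (Fin n)) (hT : G.IsTree) :
    let M : Matrix (Fin n) (Fin n) ℝ := Matrix.of fun i j => (G.dist i j : ℝ)
    let A : Matrix (Fin n) (Fin n) ℝ := (2 / (n : ℝ)) • Matrix.of (fun _ _ => 1) - 1
    let C : Matrix (Fin n) (Fin n) ℝ := M * A
    ∀ x : Fin n → ℝ, x ≠ 0 → 0 < x ⬝ᵥ C.mulVec x := by
  classical
  intro M A C x hx
  have hn0 : (0 : ℝ) < n := by positivity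
  let r : Fin n := ⟨0, by omega⟩
  -- `b e` is the indicator of the side of `e` not containing the root `r`.
  let b : Sym2 (Fin n) → Fin n → ℝ := fun e u =>
    if (G.deleteEdges {e}).Reachable r u then 0 else 1
  have hD : ∀ i j, (G.dist i j : ℝ) =
      ∑ e ∈ G.edgeFinset, (b e i + b e j - 2 * b e i * b e j) := by
    intro i j
    rw [TreeDist.dist_eq hT i j (fun e => ¬ (G.deleteEdges {e}).Reachable i j) fun _ => Iff.rfl]
    push_cast
    refine Finset.sum_congr rfl fun e _ => ?_
    have h1 := @TreeDist.reachable_or _ _ hT e i r j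
    have h2 := @Reachable.symm _ (G.deleteEdges {e})
    have h3 := @Reachable.trans _ (G.deleteEdges {e})
    simp only [b]
    by_cases hi : (G.deleteEdges {e}).Reachable r i <;>
    by_cases hj : (G.deleteEdges {e}).Reachable r j
    · have : (G.deleteEdges {e}).Reachable i j := h3 (h2 hi) hj
      simp [hi, hj, this]
    · have : ¬ (G.deleteEdges {e}).Reachable i j := fun h => hj (h3 hi h)
      simp [hi, hj, this]
    · have : ¬ (G.deleteEdges {e}).Reachable i j := fun h => hi (h3 hj (h2 h))
      simp [hi, hj, this]
    · have : (G.deleteEdges {e}).Reachable i j := h1 (fun h => hi (h2 h)) hj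
      simp [hi, hj, this]
      norm_num
  have hb0 : ∀ e u, 0 ≤ b e u := fun e u => by simp only [b]; split_ifs <;> norm_num
  have hb1 : ∀ e u, b e u ≤ 1 := fun e u => by simp only [b]; split_ifs <;> norm_num
  have hbr : ∀ e, b e r = 0 := fun e => by simp [b]
  have hk0 : ∀ e, 0 ≤ ∑ u, b e u := fun e => Finset.sum_nonneg fun u _ => hb0 e u
  have hkn : ∀ e, ∑ u, b e u < n := fun e => by
    have : ∑ u, b e u < ∑ u : Fin n, (1 : ℝ) :=
      Finset.sum_lt_sum (fun u _ => hb1 e u) ⟨r, Finset.mem_univ _, by simp [hbr]⟩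
    simpa using this
  have hform := TreeDist.form_eq hn0.ne' G.edgeFinset b _ hD x
  change 0 < x ⬝ᵥ (M * A) *ᵥ x
  rw [hform]
  have hfst : ∀ e, 0 ≤ 2 * ((∑ i, b e i * x i) - (∑ i, x i) * (∑ i, b e i) / n) ^ 2 :=
    fun e => by positivity
  have hsnd : ∀ e, 0 ≤ 2 * (∑ i, x i) ^ 2 * (∑ i, b e i) * (n - ∑ i, b e i) / n ^ 2 :=
    fun e => by
      have := hk0 e
      have := sub_pos.2 (hkn e)
      positivity
  refine lt_of_le_of_ne (Finset.sum_nonneg fun e _ => add_nonneg (hfst e) (hsnd e)) fun h0 => ?_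
  have hzero := (Finset.sum_eq_zero_iff_of_nonneg
    fun e _ => add_nonneg (hfst e) (hsnd e)).1 h0.symm
  -- The total sum of `x` vanishes, as is seen from any edge of the tree.
  have hs : ∑ i, x i = 0 := by
    obtain ⟨e, he, hev, -⟩ := TreeDist.exists_parent_edge hT
      (r := r) (v := ⟨1, by omega⟩) (by simp [r, Fin.ext_iff])
    have hk : 0 < ∑ u, b e u := Finset.sum_pos' (fun u _ => hb0 e u)
      ⟨⟨1, by omega⟩, Finset.mem_univ _, by simp [b, hev]⟩
    have h := hzero e (by simpa using he)
    have h2 : 2 * (∑ i, x i) ^ 2 * (∑ i, b e i) * (n - ∑ i, b e i) / (n : ℝ) ^ 2 = 0 := by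
      linarith [hfst e, hsnd e]
    have := sub_pos.2 (hkn e)
    by_contra hne
    have : 0 < 2 * (∑ i, x i) ^ 2 * (∑ i, b e i) * (n - ∑ i, b e i) / (n : ℝ) ^ 2 := by
      positivity
    linarith
  have hX : ∀ e ∈ G.edgeSet, ∑ i, b e i * x i = 0 := by
    intro e he
    have h := hzero e (by simpa using he)
    rw [hs] at h
    simpa using h
  -- A vertex of the support of `x` at maximal distance from the root.
  obtain ⟨v, hv, hmax⟩ := Finset.exists_max_image (Finset.univ.filter fun u => x u ≠ 0)
    (fun u => G.dist r u) (by
      obtain ⟨u, hu⟩ := Function.ne_iff.1 hx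
      exact ⟨u, by simpa using hu⟩)
  simp only [Finset.mem_filter, Finset.mem_univ, true_and] at hv hmax
  by_cases hvr : v = r
  · rw [Finset.sum_eq_single r] at hs
    · exact hv (hvr ▸ hs)
    · intro u _ hu
      by_contra hxu
      have h1 := hmax u hxu
      have h2 := hT.1.pos_dist_of_ne hu.symm
      rw [hvr, dist_self] at h1
      omega
    · simp
  · obtain ⟨e, he, hev, hfar⟩ := TreeDist.exists_parent_edge hT hvr
    have h := hX e he
    rw [Finset.sum_eq_single v] at h
    · simp [b, hev] at h
      exact hv h
    · intro u _ hu
      by_cases hr : (G.deleteEdges {e}).Reachable r u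
      · simp [b, hr]
      · by_contra hne
        have := hmax u (right_ne_zero_of_mul hne)
        have := hfar u hu hr
        omega
    · simp
end

section
/- Let T be a tree on vertex set {1,...,n} with n ≥ 2 and let M be its distance matrix. Then (−1)^{n−1} det(M) > 0; that is, sgn(det(M)) = (−1)^{n−1}. -/
/-!
Root the tree at the vertex `0` and let `p v` be the parent of `v ≠ 0`. Let `P` be the matrix whose
row `0` is `e₀` and whose row `v ≠ 0` is `e_v - e_{p v}`. Then `P * M * Pᵀ` does not depend on the
tree: its `(0, 0)` entry is `0`, the other entries of its row and column `0` are `1`, and the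
remaining block is `-2 • 1`. The vanishing of the off-diagonal entries of that block expresses that
`u ↦ d(v, u) - d(p v, u)` changes only across the edge `{v, p v}` (`edge_eq_of_dist`).

The matrix `P` is invertible (a vector in its kernel vanishes at the root and is constant along
edges), so `det M` has the sign of the determinant of the bordered matrix, which is
`(n - 1) / 2 * (-2) ^ (n - 1)` by one row operation (`det_borderedMatrix`).
-/

namespace TreeDist

open Matrix

/-- If the edges `vp` and `xy` of a tree are such that `x` is nearer to `p` than to `v`, while `y`
is nearer to `v` than to `p`, then they are the same edge: both `v, p, …, x` and `v, …, y, x` are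
geodesics, so they coincide, and `y` is too far from `p` to lie on the part from `p` to `x`. -/
lemma edge_eq_of_dist {V : Type*} {G : SimpleGraph V} (hT : G.IsTree) {v p x y : V}
    (hvp : G.Adj v p) (hxy : G.Adj x y)
    (hx : G.dist v x = G.dist p x + 1) (hy : G.dist p y = G.dist v y + 1) :
    y = v ∧ x = p := by
  have hc := hT.connected
  have h1 : G.dist v x ≤ G.dist v y + 1 := by
    have := hc.dist_triangle (u := v) (v := y) (w := x)
    rwa [SimpleGraph.dist_eq_one_iff_adj.mpr hxy.symm] at this
  have h2 : G.dist p y ≤ G.dist p x + 1 := by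
    have := hc.dist_triangle (u := p) (v := x) (w := y)
    rwa [SimpleGraph.dist_eq_one_iff_adj.mpr hxy] at this
  obtain ⟨q, hq⟩ := hc.exists_walk_length_eq_dist p x
  obtain ⟨q', hq'⟩ := hc.exists_walk_length_eq_dist v y
  have hP : (SimpleGraph.Walk.cons hvp q).IsPath :=
    SimpleGraph.Walk.isPath_of_length_eq_dist _ (by simp; omega)
  have hP' : (q'.concat hxy.symm).IsPath :=
    SimpleGraph.Walk.isPath_of_length_eq_dist _ (by simp; omega)
  have heq := (hT.existsUnique_path v x).unique hP hP'
  have hmem : y ∈ (SimpleGraph.Walk.cons hvp q).support := by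
    rw [heq]; simp [SimpleGraph.Walk.support_concat]
  have hyv : y = v := by
    rw [SimpleGraph.Walk.support_cons, List.mem_cons] at hmem
    rcases hmem with h | h
    · exact h
    · classical
      have := SimpleGraph.dist_le (q.takeUntil y h)
      have := q.length_takeUntil_le_length h
      omega
  refine ⟨hyv, ?_⟩
  subst hyv
  have : G.dist p x = 0 := by
    have : G.dist y y = 0 := SimpleGraph.dist_self
    omega
  exact (hc.dist_eq_zero_iff.mp this).symm

lemma exists_parent {V : Type*} {G : SimpleGraph V} (hc : G.Connected) (r v : V) (h : v ≠ r) :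
    ∃ p, G.Adj v p ∧ G.dist v r = G.dist p r + 1 := by
  obtain ⟨q, hq⟩ := hc.exists_walk_length_eq_dist v r
  cases q with
  | nil => exact absurd rfl h
  | @cons _ p _ hadj q =>
    refine ⟨p, hadj, ?_⟩
    have h1 := SimpleGraph.dist_le q
    have h2 := hc.dist_triangle (u := v) (v := p) (w := r)
    rw [SimpleGraph.dist_eq_one_iff_adj.mpr hadj] at h2
    simp only [SimpleGraph.Walk.length_cons] at hq
    omega

/-- Second difference of the distance function of a tree along two edges directed towards the
root `r`. -/
lemma second_difference {V : Type*} [DecidableEq V] {G : SimpleGraph V} (hT : G.IsTree)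
    (r : V) {v p w q : V}
    (hvp : G.Adj v p) (hv : G.dist v r = G.dist p r + 1)
    (hwq : G.Adj w q) (hw : G.dist w r = G.dist q r + 1) (hpq : v = w → p = q) :
    (G.dist v w : ℝ) - G.dist p w - (G.dist v q - G.dist p q) = if v = w then -2 else 0 := by
  split_ifs with h
  · obtain rfl := hpq h
    subst h
    have h1 := SimpleGraph.dist_eq_one_iff_adj.mpr hvp
    have h2 := SimpleGraph.dist_eq_one_iff_adj.mpr hvp.symm
    simp [h1, h2]
    norm_num
  · have hcw := hT.dist_eq_dist_add_one_of_adj w hvp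
    have hcq := hT.dist_eq_dist_add_one_of_adj q hvp
    simp only [SimpleGraph.dist_comm (u := w), SimpleGraph.dist_comm (u := q)] at hcw hcq
    rcases hcw with h1 | h1 <;> rcases hcq with h2 | h2
    · rw [h1, h2]; push_cast; ring
    · obtain ⟨rfl, rfl⟩ := edge_eq_of_dist hT hvp hwq h1 h2
      omega
    · exact absurd (edge_eq_of_dist hT hvp hwq.symm h2 h1).1.symm h
    · rw [h1, h2]; push_cast; ring

/-- The matrix with rows `e₀` and `e_i - e_{p i}` for `i ≠ 0`. -/
def parentMatrix {m : ℕ} (p : Fin (m + 1) → Fin (m + 1)) :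
    Matrix (Fin (m + 1)) (Fin (m + 1)) ℝ :=
  of fun i k => (if i = k then 1 else 0) - (if i = 0 then 0 else if p i = k then 1 else 0)

lemma parentMatrix_mul_apply {m : ℕ} (p : Fin (m + 1) → Fin (m + 1))
    (A : Matrix (Fin (m + 1)) (Fin (m + 1)) ℝ) (i j : Fin (m + 1)) :
    (parentMatrix p * A) i j = A i j - if i = 0 then 0 else A (p i) j := by
  by_cases h : i = 0 <;> simp [parentMatrix, Matrix.mul_apply, sub_mul, Finset.sum_sub_distrib, h]

lemma parentMatrix_mulVec {m : ℕ} (p : Fin (m + 1) → Fin (m + 1))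
    (x : Fin (m + 1) → ℝ) (i : Fin (m + 1)) :
    (parentMatrix p *ᵥ x) i = x i - if i = 0 then 0 else x (p i) := by
  by_cases h : i = 0 <;>
    simp [parentMatrix, Matrix.mulVec, dotProduct, sub_mul, Finset.sum_sub_distrib, h]

/-- The height function `d` witnesses that iterating `p` reaches the root. -/
lemma det_parentMatrix_ne_zero {m : ℕ} (p : Fin (m + 1) → Fin (m + 1)) (d : Fin (m + 1) → ℕ)
    (hd : ∀ i, i ≠ 0 → d (p i) < d i) : (parentMatrix p).det ≠ 0 := by
  intro hdet
  obtain ⟨x, hx, hx0⟩ := Matrix.exists_mulVec_eq_zero_iff.mpr hdet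
  apply hx
  have key : ∀ k i, d i = k → x i = 0 := by
    intro k
    induction k using Nat.strong_induction_on with
    | _ k ih =>
      intro i hi
      have h := congrFun hx0 i
      rw [parentMatrix_mulVec] at h
      by_cases h0 : i = 0
      · simpa [h0] using h
      · rw [if_neg h0, ih (d (p i)) (hi ▸ hd i h0) (p i) rfl] at h
        simpa using h
  funext i
  exact key _ i rfl

/-- The matrix `-2 • 1` bordered by a row and a column of ones with corner entry `0`. -/
def borderedMatrix (m : ℕ) : Matrix (Fin (m + 1)) (Fin (m + 1)) ℝ :=
  of fun i j => if i = 0 then (if j = 0 then 0 else 1) else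
    if j = 0 then 1 else if i = j then -2 else 0

lemma det_borderedMatrix (m : ℕ) : (borderedMatrix m).det = (m / 2 : ℝ) * (-2) ^ m := by
  -- `L` adds half of every other row to row `0`, which makes the matrix lower triangular.
  let L : Matrix (Fin (m + 1)) (Fin (m + 1)) ℝ :=
    of fun i j => if i = j then 1 else if i = 0 then 1 / 2 else 0
  have hL : L.det = 1 := by
    rw [Matrix.det_of_isUpperTriangular]
    · simp [L]
    · intro i j hij
      have hij' : j < i := hij
      have h0 : i ≠ 0 := Fin.ne_zero_of_lt hij'
      simp [L, h0, hij'.ne']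
  have h0 : ∀ j, (L * borderedMatrix m) 0 j = if j = 0 then (m / 2 : ℝ) else 0 := by
    intro j
    refine Fin.cases ?_ (fun j => ?_) j
    · simp [L, borderedMatrix, Matrix.mul_apply, Fin.sum_univ_succ, (Fin.succ_ne_zero _).symm]
      ring
    · simp [L, borderedMatrix, Matrix.mul_apply, Fin.sum_univ_succ, (Fin.succ_ne_zero _).symm]
  have hs : ∀ (i : Fin m) j, (L * borderedMatrix m) i.succ j = borderedMatrix m i.succ j := by
    intro i j
    simp [L, Matrix.mul_apply]
  have hdet : (L * borderedMatrix m).det = (m / 2 : ℝ) * (-2) ^ m := by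
    rw [Matrix.det_of_isLowerTriangular]
    · rw [Fin.prod_univ_succ, h0]
      simp only [hs]
      simp [borderedMatrix]
    · intro i j hij
      have hij' : i < j := hij
      have hj : j ≠ 0 := Fin.ne_zero_of_lt hij'
      revert hij'
      refine Fin.cases (fun _ => ?_) (fun i hij' => ?_) i
      · simp [h0, hj]
      · rw [hs]
        simp [borderedMatrix, hj, hij'.ne]
  rwa [Matrix.det_mul, hL, one_mul] at hdet

end TreeDist

open TreeDist in
theorem stmt16 (n : ℕ) (hn : 2 ≤ n)
    (G : SimpleGraph (Fin n)) (hT : G.IsTree) :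
    0 < (-1 : ℝ) ^ (n - 1) * (Matrix.of fun i j => (G.dist i j : ℝ)).det := by
  obtain ⟨m, rfl⟩ : ∃ m, n = m + 1 := ⟨n - 1, by omega⟩
  set M : Matrix (Fin (m + 1)) (Fin (m + 1)) ℝ := Matrix.of fun i j => (G.dist i j : ℝ) with hM
  have hex : ∀ v : Fin (m + 1), ∃ p, v ≠ 0 → G.Adj v p ∧ G.dist v 0 = G.dist p 0 + 1 := by
    intro v
    by_cases h : v = 0
    · exact ⟨0, fun h' => absurd h h'⟩
    · obtain ⟨p, hp⟩ := exists_parent hT.connected 0 v h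
      exact ⟨p, fun _ => hp⟩
  choose p hp using hex
  have hPdet : (parentMatrix p).det ≠ 0 :=
    det_parentMatrix_ne_zero p (fun v => G.dist v 0) fun i hi => by
      have := (hp i hi).2
      omega
  -- As `M` is symmetric, the left-hand side is the congruence `P * M * Pᵀ`.
  have hcongr : parentMatrix p * (parentMatrix p * M).transpose = borderedMatrix m := by
    ext i j
    rw [parentMatrix_mul_apply]
    simp only [Matrix.transpose_apply, parentMatrix_mul_apply]
    by_cases hi : i = 0 <;> by_cases hj : j = 0
    · simp [hi, hj, hM, borderedMatrix]
    · simp [hi, hj, hM, borderedMatrix, (hp j hj).2]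
    · have h := (hp i hi).2
      rw [SimpleGraph.dist_comm, SimpleGraph.dist_comm (u := p i)] at h
      simp [hi, hj, hM, borderedMatrix, h]
    · have h := second_difference hT 0 (hp j hj).1 (hp j hj).2 (hp i hi).1 (hp i hi).2
        (fun h => by rw [h])
      simpa [hi, hj, hM, borderedMatrix, eq_comm] using h
  have hdet := congrArg Matrix.det hcongr
  rw [Matrix.det_mul, Matrix.det_transpose, Matrix.det_mul, det_borderedMatrix] at hdet
  have hm : (0 : ℝ) < m := by
    have : 0 < m := by omega
    exact_mod_cast this
  have hsq : 0 < (parentMatrix p).det ^ 2 := by positivity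
  have hmain : (parentMatrix p).det ^ 2 * ((-1 : ℝ) ^ m * M.det) = m / 2 * 2 ^ m := by
    calc (parentMatrix p).det ^ 2 * ((-1 : ℝ) ^ m * M.det)
        = (-1) ^ m * ((parentMatrix p).det * ((parentMatrix p).det * M.det)) := by ring
      _ = m / 2 * ((-1) ^ m * (-2) ^ m) := by rw [hdet]; ring
      _ = m / 2 * 2 ^ m := by rw [← mul_pow]; norm_num
  rw [Nat.add_sub_cancel]
  refine pos_of_mul_pos_right ?_ hsq.le
  rw [hmain]
  positivity
end

section
/- Let T be a tree on vertex set {1,...,n} with n ≥ 2, let M denote the order-4 Steiner distance form of T, and let A = (2/n)J_n − I_n. Suppose x = s𝕁 for some s ∈ ℝ and y ∈ ℝ^n satisfies Σ_{i=1}^n y_i = 0, and set v = x + y. Then M(v, v, v, Av) + M(v, Av, Av, Av) = 2 M(x,x,x,x) − 2 M(y,y,y,y). -/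
/-!
Since `A 𝕁 = 𝕁` and `A y = -y` when `y` sums to zero, `A v = x - y`. The form is multilinear, and it
is symmetric because the Steiner distance of a tuple depends only on its range. In a symmetric
multilinear form the claim is the commutative polynomial identity
`(x + y)³ (x - y) + (x + y) (x - y)³ = 2 x⁴ - 2 y⁴`.
-/

open scoped Classical

theorem steinerForm_comp_perm {n k : ℕ} (G : SimpleGraph (Fin n)) (c : Fin k → Fin n → ℝ)
    (σ : Equiv.Perm (Fin k)) : steinerForm G k (c ∘ σ) = steinerForm G k c := by
  unfold steinerForm
  refine Fintype.sum_equiv (σ.arrowCongr (Equiv.refl _)) _ _ fun i => ?_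
  have hr : Set.range (σ.arrowCongr (Equiv.refl (Fin n)) i) = Set.range i := by
    simp [Equiv.arrowCongr]
  rw [hr]
  congr 1
  exact Fintype.prod_equiv σ _ _ fun j => by simp [Equiv.arrowCongr]

theorem steinerForm_update_add {n k : ℕ} (G : SimpleGraph (Fin n)) (c : Fin k → Fin n → ℝ)
    (j : Fin k) (a b : Fin n → ℝ) :
    steinerForm G k (Function.update c j (a + b)) =
      steinerForm G k (Function.update c j a) + steinerForm G k (Function.update c j b) := by
  unfold steinerForm
  rw [← Finset.sum_add_distrib]
  refine Finset.sum_congr rfl fun i _ => ?_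
  simp only [← Finset.mul_prod_erase Finset.univ _ (Finset.mem_univ j), Function.update_self,
    Pi.add_apply]
  have h (d : Fin n → ℝ) : ∏ l ∈ Finset.univ.erase j, Function.update c j d l (i l) =
      ∏ l ∈ Finset.univ.erase j, c l (i l) :=
    Finset.prod_congr rfl fun l hl => by rw [Function.update_of_ne (Finset.ne_of_mem_erase hl)]
  simp only [h]
  ring

theorem steinerForm_update_sub {n k : ℕ} (G : SimpleGraph (Fin n)) (c : Fin k → Fin n → ℝ)
    (j : Fin k) (a b : Fin n → ℝ) :
    steinerForm G k (Function.update c j (a - b)) =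
      steinerForm G k (Function.update c j a) - steinerForm G k (Function.update c j b) := by
  have h := steinerForm_update_add G c j (a - b) b
  rw [sub_add_cancel] at h
  linarith

/-- The identity `(x + y)³ (x - y) + (x + y) (x - y)³ = 2 x⁴ - 2 y⁴`, read in the order-4 form. -/
theorem steinerForm_four_identity {n : ℕ} (G : SimpleGraph (Fin n)) (x y : Fin n → ℝ) :
    steinerForm G 4 ![x + y, x + y, x + y, x - y] +
        steinerForm G 4 ![x + y, x - y, x - y, x - y] =
      2 * steinerForm G 4 ![x, x, x, x] - 2 * steinerForm G 4 ![y, y, y, y] := by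
  have add0 (b c d) := steinerForm_update_add G ![x, b, c, d] 0 x y
  have add1 (a c d) := steinerForm_update_add G ![a, x, c, d] 1 x y
  have add2 (a b d) := steinerForm_update_add G ![a, b, x, d] 2 x y
  have sub1 (a c d) := steinerForm_update_sub G ![a, x, c, d] 1 x y
  have sub2 (a b d) := steinerForm_update_sub G ![a, b, x, d] 2 x y
  have sub3 (a b c) := steinerForm_update_sub G ![a, b, c, x] 3 x y
  have upd (a b c d e : Fin n → ℝ) :
      Function.update ![a, b, c, d] 0 e = ![e, b, c, d] ∧
      Function.update ![a, b, c, d] 1 e = ![a, e, c, d] ∧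
      Function.update ![a, b, c, d] 2 e = ![a, b, e, d] ∧
      Function.update ![a, b, c, d] 3 e = ![a, b, c, e] := by
    refine ⟨?_, ?_, ?_, ?_⟩ <;> (funext j; fin_cases j <;> rfl)
  simp only [upd] at add0 add1 add2 sub1 sub2 sub3
  -- Adjacent transpositions, oriented so that rewriting moves every `x` in front of every `y`.
  have sw0 (c d) : steinerForm G 4 ![y, x, c, d] = steinerForm G 4 ![x, y, c, d] := by
    rw [← steinerForm_comp_perm G ![x, y, c, d] (Equiv.swap 0 1)]
    congr 1; funext j; fin_cases j <;> rfl
  have sw1 (a d) : steinerForm G 4 ![a, y, x, d] = steinerForm G 4 ![a, x, y, d] := by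
    rw [← steinerForm_comp_perm G ![a, x, y, d] (Equiv.swap 1 2)]
    congr 1; funext j; fin_cases j <;> rfl
  have sw2 (a b) : steinerForm G 4 ![a, b, y, x] = steinerForm G 4 ![a, b, x, y] := by
    rw [← steinerForm_comp_perm G ![a, b, x, y] (Equiv.swap 2 3)]
    congr 1; funext j; fin_cases j <;> rfl
  simp only [add0, add1, add2, sub1, sub2, sub3, sw0, sw1, sw2]
  ring

theorem stmt17 (n : ℕ) (hn : 2 ≤ n)
    (G : SimpleGraph (Fin n)) (hT : G.IsTree)
    (s : ℝ) (y : Fin n → ℝ) (hy : ∑ i, y i = 0) :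
    let A : Matrix (Fin n) (Fin n) ℝ := (2 / (n : ℝ)) • Matrix.of (fun _ _ => 1) - 1
    let x : Fin n → ℝ := fun _ => s
    let v : Fin n → ℝ := x + y
    steinerForm G 4 ![v, v, v, A.mulVec v] + steinerForm G 4 ![v, A.mulVec v, A.mulVec v, A.mulVec v] =
      2 * steinerForm G 4 ![x, x, x, x] - 2 * steinerForm G 4 ![y, y, y, y] := by
  intro A x v
  have hA : A.mulVec v = x - y := by
    have hn0 : (n : ℝ) ≠ 0 := by positivity
    funext i
    have hs : ∑ j, v j = n * s := by
      simp [v, x, Finset.sum_add_distrib, hy]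
    have h1 : (Matrix.of (fun _ _ => 1) : Matrix (Fin n) (Fin n) ℝ).mulVec v i = n * s := by
      rw [← hs]
      simp [Matrix.mulVec, dotProduct]
    simp only [A, Matrix.sub_mulVec, Matrix.smul_mulVec, Matrix.one_mulVec, Pi.sub_apply,
      Pi.smul_apply, h1, smul_eq_mul]
    simp only [v, x, Pi.add_apply]
    field_simp
    ring
  rw [hA]
  exact steinerForm_four_identity G x y
end
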